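/- arXiv:1812.10545 — 9 statements merged into one kernel-verified Lean document; each statement's English description precedes it below -/
import Mathlib

section
/- Let N be a positive integer, let κ_1,…,κ_N be real numbers with κ_n + κ_m ≠ 0 for all n,m, and let d_1,…,d_N be real numbers. Then the determinant of the N×N matrix with entries δ_{nm} + d_n/(κ_n + κ_m) equals the sum over all subsets I ⊆ {1,…,N} of ∏_{i,j∈I, i<j} ((κ_i−κ_j)²/(κ_i+κ_j)²) · ∏_{i∈I} d_i/(2κ_i), where the empty subset contributes 1. -/
open Finset

/-- Cauchy determinant, symmetric form with row scaling. -/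
theorem cauchy_aux (n : ℕ) : ∀ (κ d : Fin n → ℝ), (∀ i j, κ i + κ j ≠ 0) →
    (Matrix.of fun i j : Fin n => d i / (κ i + κ j)).det =
      (∏ i, ∏ j, if i < j then (κ i - κ j) ^ 2 / (κ i + κ j) ^ 2 else 1) *
        ∏ i, d i / (2 * κ i) := by
  induction n with
  | zero => intro κ d _; simp
  | succ n ih =>
    intro κ d h
    have h0 : κ 0 ≠ 0 := fun h' => h 0 0 (by simp [h'])
    by_cases hd : d 0 = 0
    · rw [Matrix.det_eq_zero_of_row_eq_zero 0 (by intro j; simp [hd])]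
      rw [Fin.prod_univ_succ (fun i => d i / (2 * κ i))]
      simp [hd]
    have key : (Matrix.of fun i j : Fin (n+1) => d i / (κ i + κ j)).det =
        (Matrix.of fun i j : Fin (n+1) => d i / (κ i + κ j) -
          (if i = 0 then 0 else d i / (κ i + κ 0) * (2 * κ 0) / d 0) *
            (d 0 / (κ 0 + κ j))).det := by
      apply Matrix.det_eq_of_forall_row_eq_smul_add_const
        (fun i => if i = 0 then 0 else d i / (κ i + κ 0) * (2 * κ 0) / d 0) 0 (by simp)
      intro i j
      simp
    rw [key, Matrix.det_succ_column_zero, Fin.sum_univ_succ, Finset.sum_eq_zero, add_zero]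
    · have hsub : ((Matrix.of fun i j : Fin (n+1) => d i / (κ i + κ j) -
          (if i = 0 then 0 else d i / (κ i + κ 0) * (2 * κ 0) / d 0) *
            (d 0 / (κ 0 + κ j))).submatrix (Fin.succAbove 0) Fin.succ) =
          Matrix.of fun i j : Fin n => ((κ j.succ - κ 0) / (κ j.succ + κ 0)) *
            (Matrix.of fun i j : Fin n => ((κ i.succ - κ 0) / (κ i.succ + κ 0) * d i.succ) /
              (κ i.succ + κ j.succ)) i j := by
        ext i j
        have h1 := h i.succ j.succ
        have h2 := h i.succ 0
        have h3 := h j.succ 0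
        have h4 := h 0 j.succ
        simp only [Matrix.submatrix_apply, Matrix.of_apply, Fin.zero_succAbove,
          Fin.succ_ne_zero, if_false]
        rw [add_comm (κ 0) (κ j.succ)]
        field_simp
        ring
      rw [hsub, Matrix.det_mul_row, ih (fun i => κ i.succ) _ (fun i j => h _ _)]
      simp only [Fin.prod_univ_succ, Matrix.of_apply, lt_irrefl, if_false, Fin.succ_pos, if_true,
        Fin.succ_lt_succ_iff, Fin.not_lt_zero, one_mul]
      have e1 : ∀ i : Fin n, (κ i.succ - κ 0) / (κ i.succ + κ 0) * d i.succ / (2 * κ i.succ) =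
        (κ i.succ - κ 0) / (κ i.succ + κ 0) * (d i.succ / (2 * κ i.succ)) := fun i => by ring
      have e2 : ∀ i : Fin n, (κ 0 - κ i.succ) ^ 2 / (κ 0 + κ i.succ) ^ 2 =
        (κ i.succ - κ 0) / (κ i.succ + κ 0) * ((κ i.succ - κ 0) / (κ i.succ + κ 0)) := fun i => by
        rw [add_comm (κ 0), div_mul_div_comm, ← pow_two, ← pow_two, sub_sq_comm]
      simp only [e1, e2, Finset.prod_mul_distrib]
      simp
      ring
    · intro i _
      have h2 := h i.succ 0
      have : (Matrix.of fun i j : Fin (n+1) => d i / (κ i + κ j) -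
          (if i = 0 then 0 else d i / (κ i + κ 0) * (2 * κ 0) / d 0) *
            (d 0 / (κ 0 + κ j))) i.succ 0 = 0 := by
        simp only [Matrix.of_apply, Fin.succ_ne_zero, if_false]
        field_simp
        ring
      rw [this]; simp

/-- The determinant of the matrix `δ_{nm} + d_n/(κ_n + κ_m)` equals the soliton tau
function sum over all subsets `I ⊆ {1,…,N}`. -/
theorem soliton_determinant_expansion (N : ℕ) (hN : 0 < N) (κ d : Fin N → ℝ)
    (hκ : ∀ n m, κ n + κ m ≠ 0) :
    (Matrix.of fun n m : Fin N =>
        (if n = m then (1 : ℝ) else 0) + d n / (κ n + κ m)).det =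
      ∑ I : Finset (Fin N),
        (∏ i ∈ I, ∏ j ∈ I.filter (fun j => i < j),
            ((κ i - κ j) ^ 2 / (κ i + κ j) ^ 2)) *
          ∏ i ∈ I, d i / (2 * κ i) := by
  have hexp := (Matrix.detRowAlternating (n := Fin N) (R := ℝ)).map_add_univ
    (Matrix.of fun n m : Fin N => d n / (κ n + κ m)).row (1 : Matrix (Fin N) (Fin N) ℝ).row
  have hl : (Matrix.of fun n m : Fin N => (if n = m then (1 : ℝ) else 0) + d n / (κ n + κ m)) =
      Matrix.of ((Matrix.of fun n m : Fin N => d n / (κ n + κ m)).row +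
        (1 : Matrix (Fin N) (Fin N) ℝ).row) := by
    ext i j
    change _ = d i / (κ i + κ j) + (1 : Matrix (Fin N) (Fin N) ℝ) i j
    simp [Matrix.one_apply, add_comm]
  rw [hl]
  refine hexp.trans (Finset.sum_congr rfl fun s _ => ?_)
  refine (Matrix.det_piecewise_one_eq_submatrix_det _ s).trans ?_
  let e := s.orderIsoOfFin rfl
  rw [← Matrix.det_submatrix_equiv_self e.toEquiv]
  refine (cauchy_aux s.card (fun i => κ (e i)) (fun i => d (e i)) (fun i j => hκ _ _)).trans ?_
  have hp : ∀ f : Fin N → ℝ, ∏ i ∈ s, f i = ∏ a : Fin s.card, f (e a) := fun f => by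
    rw [← Finset.prod_coe_sort]
    exact (Equiv.prod_comp e.toEquiv (fun x : s => f x)).symm
  rw [hp]
  simp only [Finset.prod_filter, hp]
  simp [e.lt_iff_lt]
end

section
/- Let N be a positive integer, let κ_1,…,κ_N be nonzero real numbers with κ_i ≠ ±κ_j for i ≠ j, and let q_1,…,q_N be positive real numbers. Define the tau function A(x,t) = Σ_{I ⊆ {1,…,N}} ∏_{i,j∈I, i<j} ((κ_i−κ_j)²/(κ_i+κ_j)²) ∏_{i∈I} q_i e^{−2κ_i x + 8κ_i³ t}. Then A(x,t) > 0 for all (x,t) ∈ ℝ², A is smooth, and the function u(x,t) = −2 ∂²/∂x² log A(x,t) satisfies the Korteweg–de Vries equation u_t = 6 u u_x − u_{xxx} on all of ℝ². -/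
open Finset Filter Topology

lemma kdv_det_deriv {n : Type*} [Fintype n] [DecidableEq n] (M : ℝ → Matrix n n ℝ)
    (M' : Matrix n n ℝ) (x : ℝ) (h : ∀ i j, HasDerivAt (fun y => M y i j) (M' i j) x) :
    HasDerivAt (fun y => (M y).det) (Matrix.trace ((M x).adjugate * M')) x := by
  have h1 : HasDerivAt (fun y => (M y).det)
      (∑ σ : Equiv.Perm n, (Equiv.Perm.sign σ : ℤ) •
        ∑ i, (∏ j ∈ univ.erase i, M x (σ j) j) • M' (σ i) i) x := by
    simp only [Matrix.det_apply]
    refine HasDerivAt.fun_sum fun σ _ => ?_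
    have := HasDerivAt.fun_finsetProd (u := (univ : Finset n)) (f := fun i y => M y (σ i) i)
      (f' := fun i => M' (σ i) i) (x := x) (fun i _ => h (σ i) i)
    exact this.const_smul _
  convert h1 using 1
  simp only [Matrix.trace, Matrix.diag]
  have h2 : ∀ i, ((M x).adjugate * M') i i = ((M x).updateCol i (fun k => M' k i)).det := by
    intro i
    rw [← Matrix.cramer_apply, Matrix.cramer_eq_adjugate_mulVec]
    rfl
  simp only [h2, Matrix.det_apply, smul_sum]
  rw [sum_comm]
  refine sum_congr rfl fun σ _ => sum_congr rfl fun i _ => ?_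
  rw [← mul_prod_erase univ _ (mem_univ i)]
  have : ∏ j ∈ univ.erase i, ((M x).updateCol i (fun k => M' k i)) (σ j) j
      = ∏ j ∈ univ.erase i, M x (σ j) j := by
    refine prod_congr rfl fun j hj => ?_
    rw [Matrix.updateCol_ne (ne_of_mem_erase hj)]
  rw [this]
  simp [mul_comm, Units.smul_def]

section
attribute [local instance] Matrix.linftyOpNormedAddCommGroup Matrix.linftyOpNormedRing
  Matrix.linftyOpNormedAlgebra Matrix.linftyOpNormedSpace

lemma kdv_inv_deriv {n : Type*} [Fintype n] [DecidableEq n] (M : ℝ → Matrix n n ℝ)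
    (M' : Matrix n n ℝ) (x : ℝ) (h : ∀ i j, HasDerivAt (fun y => M y i j) (M' i j) x)
    (hM : IsUnit (M x).det) (i j : n) :
    HasDerivAt (fun y => (M y)⁻¹ i j) (-((M x)⁻¹ * M' * (M x)⁻¹) i j) x := by
  have h1 : HasDerivAt M M' x := by
    have : HasDerivAt (fun y => ∑ i, ∑ j, M y i j • (Matrix.single i j (1 : ℝ)))
        (∑ i, ∑ j, M' i j • (Matrix.single i j (1 : ℝ))) x :=
      HasDerivAt.fun_sum fun i _ => HasDerivAt.fun_sum fun j _ => (h i j).smul_const _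
    have e : ∀ P : Matrix n n ℝ, ∑ i, ∑ j, P i j • (Matrix.single i j (1 : ℝ)) = P := by
      intro P
      conv_rhs => rw [Matrix.matrix_eq_sum_single P]
      simp [Matrix.smul_single]
    simpa only [e] using this
  obtain ⟨v, hv⟩ := (Matrix.isUnit_iff_isUnit_det _).2 hM
  have h2 := hasFDerivAt_ringInverse (𝕜 := ℝ) v
  rw [hv] at h2
  have h3 := h2.comp_hasDerivAt x h1
  have h4 : HasDerivAt (fun y => (M y)⁻¹) (-((M x)⁻¹ * M' * (M x)⁻¹)) x := by
    have e : (↑v⁻¹ : Matrix n n ℝ) = (M x)⁻¹ := by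
      rw [← hv, Matrix.coe_units_inv]
    have e1 : (fun y => (M y)⁻¹) = Ring.inverse ∘ M := by
      funext y; simp [Matrix.nonsing_inv_eq_ringInverse]
    have e2 : -((M x)⁻¹ * M' * (M x)⁻¹) =
        (-((ContinuousLinearMap.mulLeftRight ℝ (Matrix n n ℝ)) ↑v⁻¹) ↑v⁻¹) M' := by
      rw [e]; rfl
    rw [e1, e2]
    exact h3
  let L : Matrix n n ℝ →ₗ[ℝ] ℝ := Matrix.entryLinearMap ℝ ℝ i j
  have h5 := (LinearMap.toContinuousLinearMap L).hasFDerivAt.comp_hasDerivAt x h4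
  exact h5
end

lemma kdv_minors {n : Type*} [Fintype n] [DecidableEq n] (M : Matrix n n ℝ) :
    (1 + M).det = ∑ s : Finset n, (M.submatrix (Subtype.val : s → n) (Subtype.val : s → n)).det := by
  rw [add_comm]
  have := (Matrix.detRowAlternating : (n → ℝ) [⋀^n]→ₗ[ℝ] ℝ).map_add_univ M (1 : Matrix n n ℝ)
  refine Eq.trans this (sum_congr rfl fun s _ => ?_)
  exact Matrix.det_piecewise_one_eq_submatrix_det M s

lemma kdv_cauchy {n : Type*} [LinearOrder n] (κ : n → ℝ)
    (h : ∀ i j, κ i + κ j ≠ 0) (s : Finset n) :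
    (Matrix.of fun i j : s => 1 / (κ i + κ j)).det =
      (∏ i ∈ s, 1 / (2 * κ i)) * ∏ i ∈ s, ∏ j ∈ s.filter (fun j => i < j),
            ((κ i - κ j) ^ 2 / (κ i + κ j) ^ 2) := by
  induction s using Finset.induction_on_max with
  | empty => simp
  | insert a s ha ih =>
    have has : a ∉ s := fun hh => lt_irrefl _ (ha a hh)
    let e : (s ⊕ Unit) ≃ {x // x ∈ insert a s} :=
      ((Finset.subtypeInsertEquivOption has).trans (Equiv.optionEquivSumPUnit _)).symm
    have he1 : ∀ i : s, (e (Sum.inl i) : n) = i := fun i => rfl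
    have he2 : (e (Sum.inr ()) : n) = a := rfl
    have h2 : κ a + κ a ≠ 0 := h a a
    rw [← Matrix.det_submatrix_equiv_self e]
    let D : Matrix Unit Unit ℝ := Matrix.of fun _ _ => 1 / (κ a + κ a)
    let D' : Matrix Unit Unit ℝ := Matrix.of fun _ _ => (κ a + κ a)
    let _ : Invertible D := ⟨D', by ext; simp [D, D', Matrix.mul_apply, h2], by
      ext; simp [D, D', Matrix.mul_apply, h2]⟩
    have hb : (Matrix.of fun i j : {x // x ∈ insert a s} => 1 / (κ i + κ j)).submatrix e e
      = Matrix.fromBlocks (Matrix.of fun i j : s => 1 / (κ i + κ j))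
        (Matrix.of fun i (_ : Unit) => 1 / (κ i + κ a))
        (Matrix.of fun (_ : Unit) (j : s) => 1 / (κ a + κ j)) D := by
      ext (i | i) (j | j) <;> rfl
    rw [hb, Matrix.det_fromBlocks₂₂]
    have hs : (Matrix.of fun i j : s => 1 / (κ i + κ j)) -
        (Matrix.of fun (i : s) (_ : Unit) => 1 / (κ i + κ a)) * ⅟D *
        (Matrix.of fun (_ : Unit) (j : s) => 1 / (κ a + κ j))
        = Matrix.of fun i j : s => ((κ i - κ a) / (κ i + κ a)) *
          (Matrix.of (fun i j : s => ((κ j - κ a) / (κ j + κ a)) *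
            (Matrix.of fun i j : s => 1 / (κ i + κ j)) i j) i j) := by
      ext i j
      have : ⅟D = D' := rfl
      simp only [this, Matrix.sub_apply, Matrix.mul_apply, Matrix.of_apply, D', univ_unique,
        sum_singleton]
      have := h i j
      have := h i a
      have := h j a
      have := h a j
      field_simp
      ring
    rw [hs, Matrix.det_mul_column, Matrix.det_mul_row, ih, prod_insert has, prod_insert has]
    have h3 : (insert a s).filter (fun j => a < j) = ∅ := by
      ext j; simp only [mem_filter, mem_insert, notMem_empty, iff_false]
      rintro ⟨rfl | hj, hlt⟩
      · exact lt_irrefl _ hlt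
      · exact lt_asymm hlt (ha j hj)
    have h4 : ∀ i ∈ s, ∏ j ∈ (insert a s).filter (fun j => i < j),
        ((κ i - κ j) ^ 2 / (κ i + κ j) ^ 2) = ((κ i - κ a) ^ 2 / (κ i + κ a) ^ 2) *
        ∏ j ∈ s.filter (fun j => i < j), ((κ i - κ j) ^ 2 / (κ i + κ j) ^ 2) := by
      intro i hi
      rw [filter_insert, if_pos (ha i hi), prod_insert (by simp [has])]
    rw [h3, prod_congr rfl h4, prod_mul_distrib, Matrix.det_unique]
    have h5 : ∏ i ∈ s, ((κ i - κ a) ^ 2 / (κ i + κ a) ^ 2)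
      = (∏ i : s, (κ i - κ a) / (κ i + κ a)) * (∏ i : s, (κ i - κ a) / (κ i + κ a)) := by
      rw [← prod_mul_distrib, ← Finset.prod_coe_sort]
      refine prod_congr rfl fun i _ => ?_
      rw [← sq, div_pow]
    rw [h5]
    simp only [D, Matrix.of_apply, prod_empty, ← two_mul]
    ring

lemma kdv_bil_deriv {n : Type*} [Fintype n] [DecidableEq n] (M : ℝ → Matrix n n ℝ)
    (M' : Matrix n n ℝ) (a b : ℝ → n → ℝ) (a' b' : n → ℝ) (x : ℝ)
    (h : ∀ i j, HasDerivAt (fun y => M y i j) (M' i j) x)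
    (ha : ∀ i, HasDerivAt (fun y => a y i) (a' i) x)
    (hb : ∀ i, HasDerivAt (fun y => b y i) (b' i) x)
    (hM : IsUnit (M x).det) :
    HasDerivAt (fun y => a y ⬝ᵥ (M y)⁻¹.mulVec (b y))
      (a' ⬝ᵥ (M x)⁻¹.mulVec (b x) + a x ⬝ᵥ (M x)⁻¹.mulVec b'
        - a x ⬝ᵥ ((M x)⁻¹ * M' * (M x)⁻¹).mulVec (b x)) x := by
  have h1 : HasDerivAt (fun y => ∑ i, a y i * ∑ j, (M y)⁻¹ i j * b y j)
      (∑ i, (a' i * ∑ j, (M x)⁻¹ i j * b x j + a x i * ∑ j,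
        (-((M x)⁻¹ * M' * (M x)⁻¹) i j * b x j + (M x)⁻¹ i j * b' j))) x :=
    HasDerivAt.fun_sum fun i _ => (ha i).mul (HasDerivAt.fun_sum fun j _ =>
      (kdv_inv_deriv M M' x h hM i j).mul (hb j))
  refine HasDerivAt.congr_deriv (h1) ?_
  simp only [dotProduct, Matrix.mulVec, ← sum_add_distrib, ← sum_sub_distrib]
  refine sum_congr rfl fun i _ => ?_
  rw [sum_add_distrib]
  simp only [neg_mul, sum_neg_distrib]
  ring

lemma kdv_bil_vec {n : Type*} [Fintype n] (R : Matrix n n ℝ) (a b c d : n → ℝ) :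
    a ⬝ᵥ (R * Matrix.vecMulVec c d * R).mulVec b = (a ⬝ᵥ R.mulVec c) * (d ⬝ᵥ R.mulVec b) := by
  rw [← Matrix.mulVec_mulVec, ← Matrix.mulVec_mulVec, Matrix.vecMulVec_mulVec]
  simp [Matrix.mulVec_smul, dotProduct_smul, mul_comm]

noncomputable def kdvE {N : ℕ} (κ : Fin N → ℝ) (a : ℕ) (x t : ℝ) (i : Fin N) : ℝ :=
  κ i ^ a * Real.exp (-κ i * x + 4 * κ i ^ 3 * t)

noncomputable def kdvH {N : ℕ} (κ d : Fin N → ℝ) (x t : ℝ) : Matrix (Fin N) (Fin N) ℝ :=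
  Matrix.of fun i j => Matrix.diagonal d i j + kdvE κ 0 x t i * kdvE κ 0 x t j / (κ i + κ j)

noncomputable def kdvW {N : ℕ} (κ d : Fin N → ℝ) (x t : ℝ) (a b : ℕ) : ℝ :=
  kdvE κ a x t ⬝ᵥ (kdvH κ d x t)⁻¹.mulVec (kdvE κ b x t)

section
variable {N : ℕ} (κ d : Fin N → ℝ)

lemma kdvE_dx (a : ℕ) (x t : ℝ) (i : Fin N) :
    HasDerivAt (fun y => kdvE κ a y t i) (-kdvE κ (a+1) x t i) x := by
  have h : HasDerivAt (fun y : ℝ => -κ i * y + 4 * κ i ^ 3 * t) (-κ i) x := by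
    simpa using ((hasDerivAt_id x).const_mul (-κ i)).add_const (4 * κ i ^ 3 * t)
  refine HasDerivAt.congr_deriv (h.exp.const_mul (κ i ^ a)) ?_
  simp only [kdvE]; ring

lemma kdvE_dt (a : ℕ) (x t : ℝ) (i : Fin N) :
    HasDerivAt (fun y => kdvE κ a x y i) (4 * kdvE κ (a+3) x t i) t := by
  have h : HasDerivAt (fun y : ℝ => -κ i * x + 4 * κ i ^ 3 * y) (4 * κ i ^ 3) t := by
    simpa using ((hasDerivAt_id t).const_mul (4 * κ i ^ 3)).const_add (-κ i * x)
  refine HasDerivAt.congr_deriv (h.exp.const_mul (κ i ^ a)) ?_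
  simp only [kdvE]; ring

lemma kdvH_dx (hs : ∀ i j, κ i + κ j ≠ 0) (x t : ℝ) (i j : Fin N) :
    HasDerivAt (fun y => kdvH κ d y t i j)
      ((-Matrix.vecMulVec (kdvE κ 0 x t) (kdvE κ 0 x t)) i j) x := by
  have h := (((kdvE_dx κ 0 x t i).mul (kdvE_dx κ 0 x t j)).div_const (κ i + κ j)).const_add
    (Matrix.diagonal d i j)
  refine HasDerivAt.congr_deriv (h) ?_
  have := hs i j
  simp only [kdvE, Matrix.neg_apply, Matrix.vecMulVec_apply]
  field_simp
  ring

lemma kdvH_dt (hs : ∀ i j, κ i + κ j ≠ 0) (x t : ℝ) (i j : Fin N) :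
    HasDerivAt (fun y => kdvH κ d x y i j)
      (((4 : ℝ) • (Matrix.vecMulVec (kdvE κ 2 x t) (kdvE κ 0 x t)
        - Matrix.vecMulVec (kdvE κ 1 x t) (kdvE κ 1 x t)
        + Matrix.vecMulVec (kdvE κ 0 x t) (kdvE κ 2 x t))) i j) t := by
  have h := (((kdvE_dt κ 0 x t i).mul (kdvE_dt κ 0 x t j)).div_const (κ i + κ j)).const_add
    (Matrix.diagonal d i j)
  refine HasDerivAt.congr_deriv (h) ?_
  have := hs i j
  simp only [kdvE, Matrix.add_apply, Matrix.sub_apply, Matrix.smul_apply, Matrix.vecMulVec_apply,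
    smul_eq_mul]
  field_simp
  ring

lemma kdvW_dx (hs : ∀ i j, κ i + κ j ≠ 0) (x t : ℝ) (hU : IsUnit (kdvH κ d x t).det) (a b : ℕ) :
    HasDerivAt (fun y => kdvW κ d y t a b)
      (-kdvW κ d x t (a+1) b - kdvW κ d x t a (b+1) + kdvW κ d x t a 0 * kdvW κ d x t 0 b) x := by
  have h := kdv_bil_deriv (fun y => kdvH κ d y t) _ (fun y => kdvE κ a y t)
    (fun y => kdvE κ b y t) (-kdvE κ (a+1) x t) (-kdvE κ (b+1) x t) x (kdvH_dx κ d hs x t)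
    (kdvE_dx κ a x t) (kdvE_dx κ b x t) hU
  refine HasDerivAt.congr_deriv (h) ?_
  simp only [Matrix.mul_neg, Matrix.neg_mul, Matrix.neg_mulVec, dotProduct_neg, kdv_bil_vec,
    neg_dotProduct, Matrix.mulVec_neg, kdvW]
  ring

lemma kdvW_dt (hs : ∀ i j, κ i + κ j ≠ 0) (x t : ℝ) (hU : IsUnit (kdvH κ d x t).det) (a b : ℕ) :
    HasDerivAt (fun y => kdvW κ d x y a b)
      (4 * (kdvW κ d x t (a+3) b + kdvW κ d x t a (b+3)
        - kdvW κ d x t a 2 * kdvW κ d x t 0 b + kdvW κ d x t a 1 * kdvW κ d x t 1 b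
        - kdvW κ d x t a 0 * kdvW κ d x t 2 b)) t := by
  have h := kdv_bil_deriv (fun y => kdvH κ d x y) _ (fun y => kdvE κ a x y)
    (fun y => kdvE κ b x y) ((4 : ℝ) • kdvE κ (a+3) x t) ((4 : ℝ) • kdvE κ (b+3) x t) t
    (kdvH_dt κ d hs x t) (kdvE_dt κ a x t) (kdvE_dt κ b x t) hU
  refine HasDerivAt.congr_deriv (h) ?_
  simp only [Matrix.mul_smul, Matrix.smul_mul, Matrix.smul_mulVec, dotProduct_smul,
    smul_dotProduct, Matrix.mulVec_smul, Matrix.mul_add, Matrix.mul_sub, Matrix.add_mul,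
    Matrix.sub_mul, Matrix.add_mulVec, Matrix.sub_mulVec, dotProduct_add, dotProduct_sub,
    kdv_bil_vec, kdvW, smul_eq_mul]
  ring

lemma kdvW_symm (x t : ℝ) (a b : ℕ) : kdvW κ d x t a b = kdvW κ d x t b a := by
  have hH : (kdvH κ d x t).transpose = kdvH κ d x t := by
    ext i j
    simp only [kdvH, Matrix.transpose_apply, Matrix.of_apply, Matrix.diagonal_apply]
    rw [add_comm (κ j), mul_comm (kdvE κ 0 x t j)]
    congr 1
    by_cases h : i = j
    · subst h; rfl
    · rw [if_neg h, if_neg (Ne.symm h)]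
  unfold kdvW
  rw [dotProduct_comm, ← Matrix.vecMul_transpose, Matrix.transpose_nonsing_inv, hH,
    ← Matrix.dotProduct_mulVec]

lemma kdvW_rel (hs : ∀ i j, κ i + κ j ≠ 0) (x t : ℝ) (hU : IsUnit (kdvH κ d x t).det) (a b : ℕ) :
    kdvW κ d x t a (b+2) - kdvW κ d x t (a+2) b =
      kdvW κ d x t a 1 * kdvW κ d x t 0 b - kdvW κ d x t a 0 * kdvW κ d x t 1 b := by
  set H := kdvH κ d x t with hH
  set K := Matrix.diagonal (fun i => κ i ^ 2) with hK
  have h1 : K * H - H * K = Matrix.vecMulVec (kdvE κ 1 x t) (kdvE κ 0 x t)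
      - Matrix.vecMulVec (kdvE κ 0 x t) (kdvE κ 1 x t) := by
    ext i j
    have := hs i j
    simp only [hK, hH, kdvH, Matrix.sub_apply, Matrix.diagonal_mul, Matrix.mul_diagonal,
      Matrix.of_apply, Matrix.vecMulVec_apply, kdvE, Matrix.diagonal_apply]
    by_cases h : i = j
    · subst h; simp; ring
    · simp only [if_neg h]
      field_simp
      ring
  have h2 : H⁻¹ * K - K * H⁻¹ = H⁻¹ * (K * H - H * K) * H⁻¹ := by
    rw [Matrix.mul_sub, Matrix.sub_mul, ← Matrix.mul_assoc H⁻¹ H K, Matrix.nonsing_inv_mul _ hU,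
      Matrix.one_mul, Matrix.mul_assoc, Matrix.mul_assoc, Matrix.mul_nonsing_inv _ hU,
      Matrix.mul_one]
  have hE : ∀ c, kdvE κ (c+2) x t = K.mulVec (kdvE κ c x t) := by
    intro c; funext i
    simp only [hK, Matrix.mulVec_diagonal, kdvE]; ring
  have hE' : ∀ c, kdvE κ (c+2) x t = Matrix.vecMul (kdvE κ c x t) K := by
    intro c; funext i
    simp only [hK, Matrix.vecMul_diagonal, kdvE]; ring
  have h3 : kdvE κ a x t ⬝ᵥ (H⁻¹ * K - K * H⁻¹).mulVec (kdvE κ b x t) =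
      kdvW κ d x t a (b+2) - kdvW κ d x t (a+2) b := by
    unfold kdvW
    rw [hE b, hE' a, ← Matrix.dotProduct_mulVec, Matrix.mulVec_mulVec, Matrix.mulVec_mulVec,
      Matrix.sub_mulVec, dotProduct_sub]
  rw [← h3, h2, h1, Matrix.mul_sub, Matrix.sub_mul, Matrix.sub_mulVec, dotProduct_sub,
    kdv_bil_vec, kdv_bil_vec]
  rfl

lemma kdv_core (hs : ∀ i j, κ i + κ j ≠ 0) (hU : ∀ x t, IsUnit (kdvH κ d x t).det)
    (u : ℝ → ℝ → ℝ) (hu : ∀ x t, u x t = 2 * (-kdvW κ d x t (0+1) 0 - kdvW κ d x t 0 (0+1)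
      + kdvW κ d x t 0 0 * kdvW κ d x t 0 0)) (x t : ℝ) :
    deriv (fun τ => u x τ) t =
      6 * u x t * deriv (fun y => u y t) x - iteratedDeriv 3 (fun y => u y t) x := by
  let X1 : ℕ → ℕ → ℝ → ℝ := fun a b y => -kdvW κ d y t (a+1) b - kdvW κ d y t a (b+1)
      + kdvW κ d y t a 0 * kdvW κ d y t 0 b
  have h1 : ∀ a b y, HasDerivAt (fun y => kdvW κ d y t a b) (X1 a b y) y :=
    fun a b y => kdvW_dx κ d hs y t (hU y t) a b
  let X2 : ℕ → ℕ → ℝ → ℝ := fun a b y => -X1 (a+1) b y - X1 a (b+1) y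
      + (X1 a 0 y * kdvW κ d y t 0 b + kdvW κ d y t a 0 * X1 0 b y)
  have h2 : ∀ a b y, HasDerivAt (X1 a b) (X2 a b y) y := fun a b y =>
    ((h1 (a+1) b y).neg.sub (h1 a (b+1) y)).add ((h1 a 0 y).mul (h1 0 b y))
  let X3 : ℕ → ℕ → ℝ → ℝ := fun a b y => -X2 (a+1) b y - X2 a (b+1) y
      + ((X2 a 0 y * kdvW κ d y t 0 b + X1 a 0 y * X1 0 b y)
        + (X1 a 0 y * X1 0 b y + kdvW κ d y t a 0 * X2 0 b y))
  have h3 : ∀ a b y, HasDerivAt (X2 a b) (X3 a b y) y := fun a b y =>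
    ((h2 (a+1) b y).neg.sub (h2 a (b+1) y)).add
      (((h2 a 0 y).mul (h1 0 b y)).add ((h1 a 0 y).mul (h2 0 b y)))
  let X4 : ℕ → ℕ → ℝ → ℝ := fun a b y => -X3 (a+1) b y - X3 a (b+1) y
      + (((X3 a 0 y * kdvW κ d y t 0 b + X2 a 0 y * X1 0 b y)
          + (X2 a 0 y * X1 0 b y + X1 a 0 y * X2 0 b y))
        + ((X2 a 0 y * X1 0 b y + X1 a 0 y * X2 0 b y)
          + (X1 a 0 y * X2 0 b y + kdvW κ d y t a 0 * X3 0 b y)))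
  have h4 : ∀ a b y, HasDerivAt (X3 a b) (X4 a b y) y := fun a b y =>
    ((h3 (a+1) b y).neg.sub (h3 a (b+1) y)).add
      ((((h3 a 0 y).mul (h1 0 b y)).add ((h2 a 0 y).mul (h2 0 b y))).add
      (((h2 a 0 y).mul (h2 0 b y)).add ((h1 a 0 y).mul (h3 0 b y))))
  have hux : (fun y => u y t) = fun y => 2 * X1 0 0 y := by
    funext y; exact hu y t
  have d1 : deriv (fun y => 2 * X1 0 0 y) = fun y => 2 * X2 0 0 y := by
    funext y; exact ((h2 0 0 y).const_mul 2).deriv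
  have d2 : deriv (fun y => 2 * X2 0 0 y) = fun y => 2 * X3 0 0 y := by
    funext y; exact ((h3 0 0 y).const_mul 2).deriv
  have d3 : deriv (fun y => 2 * X3 0 0 y) = fun y => 2 * X4 0 0 y := by
    funext y; exact ((h4 0 0 y).const_mul 2).deriv
  have i3 : iteratedDeriv 3 (fun y => u y t) x = 2 * X4 0 0 x := by
    rw [hux, iteratedDeriv_eq_iterate]
    simp only [Function.iterate_succ, Function.iterate_zero, Function.comp, id, d1, d2, d3]
  have ht := fun a b => kdvW_dt κ d hs x t (hU x t) a b
  have hut : (fun τ => u x τ) = fun τ => 2 * (-kdvW κ d x τ (0+1) 0 - kdvW κ d x τ 0 (0+1)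
      + kdvW κ d x τ 0 0 * kdvW κ d x τ 0 0) := by
    funext τ; exact hu x τ
  have dt := ((((ht (0+1) 0).neg.sub (ht 0 (0+1))).add ((ht 0 0).mul (ht 0 0))).const_mul 2).deriv
  replace dt := (congrArg (fun f => deriv f t) hut).trans dt
  rw [i3, hux, d1, hu]
  refine dt.trans ?_
  have r4 := kdvW_rel κ d hs x t (hU x t) 0 2
  have r3 := kdvW_rel κ d hs x t (hU x t) 0 1
  have sy := kdvW_symm κ d x t
  simp only [X4, X3, X2, X1, zero_add, Nat.reduceAdd]
  simp only [zero_add, Nat.reduceAdd] at r3 r4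
  clear dt hut ht i3 d3 d2 d1 hux h4 h3 h2 h1 hu
  clear X4 X3 X2 X1
  generalize kdvW κ d x t = w at *
  simp only [sy 0 1, sy 0 2, sy 0 3, sy 0 4, sy 1 2, sy 1 3] at r3 r4 ⊢
  linear_combination (-12) * r4 + 12 * w 0 0 * r3
end

lemma kdv_tau {N : ℕ} (κ q : Fin N → ℝ) (hκ0 : ∀ i, κ i ≠ 0) (hq : ∀ i, 0 < q i)
    (hs : ∀ i j, κ i + κ j ≠ 0) (x t : ℝ) :
    (∏ i, 2 * κ i * q i) * (kdvH κ (fun i => 1 / (2 * κ i * q i)) x t).det =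
      ∑ I : Finset (Fin N),
        (∏ i ∈ I, ∏ j ∈ I.filter (fun j => i < j),
            ((κ i - κ j) ^ 2 / (κ i + κ j) ^ 2)) *
          ∏ i ∈ I, q i * Real.exp (-2 * κ i * x + 8 * (κ i) ^ 3 * t) := by
  set E := kdvE κ 0 x t with hE
  have hd : ∀ i, 2 * κ i * q i ≠ 0 := fun i =>
    mul_ne_zero (mul_ne_zero two_ne_zero (hκ0 i)) (hq i).ne'
  rw [← Matrix.det_diagonal, ← Matrix.det_mul]
  have h1 : Matrix.diagonal (fun i => 2 * κ i * q i) * kdvH κ (fun i => 1 / (2 * κ i * q i)) x t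
      = 1 + Matrix.of fun i j => 2 * κ i * q i * E i * E j / (κ i + κ j) := by
    ext i j
    simp only [Matrix.diagonal_mul, kdvH, Matrix.of_apply, Matrix.add_apply,
      Matrix.diagonal_apply, Matrix.one_apply, ← hE]
    have := hd i
    by_cases h : i = j
    · simp only [if_pos h]; rw [mul_add, mul_one_div_cancel this]; ring
    · simp only [if_neg h]; ring
  rw [h1, kdv_minors]
  refine sum_congr rfl fun s _ => ?_
  have h2 : (Matrix.of fun i j => 2 * κ i * q i * E i * E j / (κ i + κ j)).submatrix
      (Subtype.val : s → Fin N) (Subtype.val : s → Fin N)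
      = Matrix.of fun i j : s => (2 * κ i * q i * E i) *
          (Matrix.of (fun i j : s => E j * (Matrix.of fun i j : s => 1 / (κ i + κ j)) i j) i j) := by
    ext i j
    simp only [Matrix.submatrix_apply, Matrix.of_apply]
    ring
  rw [h2, Matrix.det_mul_column, Matrix.det_mul_row, kdv_cauchy κ hs s]
  rw [Finset.prod_coe_sort s (fun i => 2 * κ i * q i * E i), Finset.prod_coe_sort s E]
  rw [← mul_assoc, ← mul_assoc, ← prod_mul_distrib, ← prod_mul_distrib, mul_comm]
  congr 1
  refine prod_congr rfl fun i _ => ?_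
  have h3 : Real.exp (-2 * κ i * x + 8 * (κ i) ^ 3 * t) = E i * E i := by
    simp only [hE, kdvE, pow_zero, one_mul, ← Real.exp_add]
    congr 1; ring
  rw [h3]
  have := hκ0 i
  field_simp

lemma kdv_log_deriv {N : ℕ} (κ d : Fin N → ℝ) (hs : ∀ i j, κ i + κ j ≠ 0) (c : ℝ)
    (x t : ℝ) (hc : c * (kdvH κ d x t).det ≠ 0) :
    HasDerivAt (fun y => Real.log (c * (kdvH κ d y t).det)) (-kdvW κ d x t 0 0) x := by
  have hc0 : c ≠ 0 := left_ne_zero_of_mul hc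
  have hdet : (kdvH κ d x t).det ≠ 0 := right_ne_zero_of_mul hc
  have h := ((kdv_det_deriv (fun y => kdvH κ d y t) _ x (kdvH_dx κ d hs x t)).const_mul c).log hc
  refine h.congr_deriv ?_
  have ha : (kdvH κ d x t).adjugate = (kdvH κ d x t).det • (kdvH κ d x t)⁻¹ := by
    rw [Matrix.inv_def, smul_smul, Ring.inverse_eq_inv', mul_inv_cancel₀ hdet, one_smul]
  rw [ha, Matrix.mul_neg, Matrix.smul_mul, Matrix.mul_vecMulVec, Matrix.trace_neg,
    Matrix.trace_smul, Matrix.trace_vecMulVec, dotProduct_comm]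
  unfold kdvW
  rw [smul_eq_mul]
  field_simp

/-- The `N`-soliton tau function is positive and smooth, and
`u = -2 (log A)_{xx}` solves the KdV equation `u_t = 6 u u_x - u_{xxx}`. -/
theorem nsoliton_solves_kdv (N : ℕ) (hN : 0 < N) (κ q : Fin N → ℝ)
    (hκ0 : ∀ i, κ i ≠ 0)
    (hκ : ∀ i j, i ≠ j → κ i ≠ κ j ∧ κ i ≠ -κ j)
    (hq : ∀ i, 0 < q i)
    (A : ℝ → ℝ → ℝ)
    (hA : A = fun x t => ∑ I : Finset (Fin N),
        (∏ i ∈ I, ∏ j ∈ I.filter (fun j => i < j),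
            ((κ i - κ j) ^ 2 / (κ i + κ j) ^ 2)) *
          ∏ i ∈ I, q i * Real.exp (-2 * κ i * x + 8 * (κ i) ^ 3 * t))
    (u : ℝ → ℝ → ℝ)
    (hu : u = fun x t => -2 * iteratedDeriv 2 (fun y => Real.log (A y t)) x) :
    (∀ x t : ℝ, 0 < A x t) ∧
    ContDiff ℝ (⊤ : ℕ∞) (fun p : ℝ × ℝ => A p.1 p.2) ∧
    (∀ x t : ℝ, deriv (fun τ => u x τ) t =
      6 * u x t * deriv (fun y => u y t) x - iteratedDeriv 3 (fun y => u y t) x) := by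
  have hs : ∀ i j, κ i + κ j ≠ 0 := by
    intro i j h
    by_cases hij : i = j
    · subst hij; exact hκ0 i (by linarith)
    · exact (hκ i j hij).2 (by linarith)
  have hpos : ∀ x t : ℝ, 0 < A x t := by
    intro x t
    rw [hA]
    refine sum_pos (fun I _ => mul_pos (prod_pos fun i _ => prod_pos fun j hj => ?_)
      (prod_pos fun i _ => mul_pos (hq i) (Real.exp_pos _))) univ_nonempty
    have h1 := hs i j
    have h2 : κ i - κ j ≠ 0 := sub_ne_zero.2 (hκ i j (mem_filter.1 hj).2.ne).1
    positivity
  refine ⟨hpos, ?_, ?_⟩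
  · rw [hA]
    refine ContDiff.sum fun I _ => contDiff_const.mul (contDiff_prod fun i _ => ?_)
    fun_prop
  · have hA' : ∀ x t, A x t = (∏ i, 2 * κ i * q i) *
        (kdvH κ (fun i => 1 / (2 * κ i * q i)) x t).det := by
      intro x t
      rw [kdv_tau κ q hκ0 hq hs, hA]
    set d : Fin N → ℝ := fun i => 1 / (2 * κ i * q i)
    have hne : ∀ x t, (∏ i, 2 * κ i * q i) * (kdvH κ d x t).det ≠ 0 := fun x t => by
      rw [← hA']; exact (hpos x t).ne'
    have hU : ∀ x t, IsUnit (kdvH κ d x t).det := fun x t =>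
      (right_ne_zero_of_mul (hne x t)).isUnit
    refine kdv_core κ d hs hU u fun x t => ?_
    have h1 : deriv (fun y => Real.log (A y t)) = fun y => -kdvW κ d y t 0 0 := by
      funext y
      simp only [hA']
      exact (kdv_log_deriv κ d hs _ y t (hne y t)).deriv
    rw [hu]
    simp only
    rw [iteratedDeriv_succ, iteratedDeriv_one, h1]
    rw [((kdvW_dx κ d hs x t (hU x t) 0 0).fun_neg).deriv]
    ring
end

section
/- Let κ_1,…,κ_N be distinct positive real numbers, and set q_n = ∏_{m≠n} |(κ_n+κ_m)/(κ_n−κ_m)| for n = 1,…,N. Define A(x) = Σ_{I ⊆ {1,…,N}} ∏_{i,j∈I, i<j} ((κ_i−κ_j)²/(κ_i+κ_j)²) ∏_{i∈I} q_i e^{−2κ_i x}, and let Φ = κ_1 + ⋯ + κ_N. Then the function Ã(x) = e^{Φx} A(x) is even: Ã(−x) = Ã(x) for all x ∈ ℝ. -/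
open Finset

theorem pair_prod {N : ℕ} (r : Fin N → Fin N → ℝ) (hs : ∀ i j, r i j = r j i)
    (I : Finset (Fin N)) :
    ∏ i ∈ I, ∏ j ∈ I.erase i, r i j =
      ∏ i ∈ I, ∏ j ∈ I.filter (fun j => i < j), (r i j) ^ 2 := by
  have h1 : ∀ i ∈ I, ∏ j ∈ I.erase i, r i j =
      (∏ j ∈ I.filter (fun j => i < j), r i j) * ∏ j ∈ I.filter (fun j => j < i), r i j := by
    intro i _
    rw [← Finset.prod_union]
    · apply Finset.prod_congr _ (fun _ _ => rfl)
      ext j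
      simp only [mem_erase, mem_union, mem_filter]
      constructor
      · rintro ⟨h, hj⟩
        rcases lt_or_gt_of_ne h with h | h
        · exact Or.inr ⟨hj, h⟩
        · exact Or.inl ⟨hj, h⟩
      · rintro (⟨hj, h⟩ | ⟨hj, h⟩)
        · exact ⟨h.ne', hj⟩
        · exact ⟨h.ne, hj⟩
    · rw [Finset.disjoint_left]
      intro j hj hj'
      exact lt_asymm (mem_filter.1 hj).2 (mem_filter.1 hj').2
  rw [Finset.prod_congr rfl h1, Finset.prod_mul_distrib]
  have h2 : ∏ i ∈ I, ∏ j ∈ I.filter (fun j => j < i), r i j =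
      ∏ i ∈ I, ∏ j ∈ I.filter (fun j => i < j), r i j := by
    rw [Finset.prod_comm' (t' := I) (s' := fun j => I.filter (fun i => j < i))]
    · exact Finset.prod_congr rfl fun i _ => Finset.prod_congr rfl fun j _ => hs j i
    · intro x y
      simp only [mem_filter]
      tauto
  rw [h2, ← Finset.prod_mul_distrib]
  refine Finset.prod_congr rfl fun i _ => ?_
  rw [← Finset.prod_mul_distrib]
  exact Finset.prod_congr rfl fun j _ => (sq _).symm

/-- For the symmetric choice of phases `q_n = ∏_{m≠n} |(κ_n+κ_m)/(κ_n−κ_m)|`,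
the modified tau function `Ã(x) = e^{Φx} A(x)` is even. -/
theorem symmetric_tau_is_even (N : ℕ) (hN : 0 < N) (κ : Fin N → ℝ)
    (hpos : ∀ n, 0 < κ n) (hinj : Function.Injective κ)
    (q : Fin N → ℝ)
    (hq : ∀ n, q n = ∏ m ∈ univ.erase n, |(κ n + κ m) / (κ n - κ m)|)
    (A : ℝ → ℝ)
    (hA : A = fun x => ∑ I : Finset (Fin N),
        (∏ i ∈ I, ∏ j ∈ I.filter (fun j => i < j),
            ((κ i - κ j) ^ 2 / (κ i + κ j) ^ 2)) *
          ∏ i ∈ I, q i * Real.exp (-2 * κ i * x))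
    (Φ : ℝ) (hΦ : Φ = ∑ n, κ n) :
    ∀ x : ℝ, Real.exp (Φ * (-x)) * A (-x) = Real.exp (Φ * x) * A x := by
  set r : Fin N → Fin N → ℝ := fun n m => |(κ n + κ m) / (κ n - κ m)| with hr
  have hs : ∀ i j, r i j = r j i := by
    intro i j
    simp only [hr, abs_div]
    rw [add_comm, abs_sub_comm]
  have hC : ∀ I : Finset (Fin N),
      (∏ i ∈ I, ∏ j ∈ I.filter (fun j => i < j), ((κ i - κ j) ^ 2 / (κ i + κ j) ^ 2)) *
        ∏ i ∈ I, q i = ∏ i ∈ I, ∏ j ∈ Iᶜ, r i j := by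
    intro I
    have hqI : ∏ i ∈ I, q i = (∏ i ∈ I, ∏ j ∈ I.erase i, r i j) * ∏ i ∈ I, ∏ j ∈ Iᶜ, r i j := by
      rw [← Finset.prod_mul_distrib]
      refine Finset.prod_congr rfl fun i hi => ?_
      rw [hq, ← Finset.prod_union]
      · apply Finset.prod_congr _ (fun _ _ => rfl)
        ext j
        simp only [mem_erase, mem_union, mem_compl, mem_univ, and_true]
        by_cases hj : j ∈ I
        · simp [hj]
        · have : j ≠ i := fun h => hj (h ▸ hi)
          simp [hj, this]
      · rw [Finset.disjoint_left]
        intro j hj hj'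
        exact (mem_compl.1 hj') (mem_of_mem_erase hj)
    rw [hqI, ← mul_assoc, pair_prod r hs, ← Finset.prod_mul_distrib]
    rw [Finset.prod_eq_one, one_mul]
    intro i _
    rw [← Finset.prod_mul_distrib]
    apply Finset.prod_eq_one
    intro j hj
    have hij : κ i - κ j ≠ 0 := sub_ne_zero.2 fun h => (mem_filter.1 hj).2.ne (hinj h)
    have hij' : κ i + κ j ≠ 0 := (add_pos (hpos i) (hpos j)).ne'
    simp only [hr, sq_abs]
    field_simp
  have hT : ∀ x, Real.exp (Φ * x) * A x = ∑ I : Finset (Fin N),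
      (∏ i ∈ I, ∏ j ∈ Iᶜ, r i j) * Real.exp ((∑ i ∈ Iᶜ, κ i - ∑ i ∈ I, κ i) * x) := by
    intro x
    rw [hA]
    simp only
    rw [Finset.mul_sum]
    refine Finset.sum_congr rfl fun I _ => ?_
    rw [Finset.prod_mul_distrib, ← mul_assoc (∏ i ∈ I, _), hC, ← Real.exp_sum, mul_left_comm,
      ← Real.exp_add, hΦ, ← Finset.sum_add_sum_compl I, ← Finset.sum_mul, ← Finset.mul_sum]
    congr 2
    ring
  intro x
  rw [hT, hT]
  refine Fintype.sum_equiv (Equiv.ofBijective _ compl_bijective) _ _ fun I => ?_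
  simp only [Equiv.ofBijective_apply, compl_compl]
  rw [Finset.prod_comm]
  congr 1
  · exact Finset.prod_congr rfl fun i _ => Finset.prod_congr rfl fun j _ => hs j i
  · congr 1
    ring
end

section
/- Let κ_1,…,κ_N be distinct positive real numbers, and set q_n = ∏_{m≠n} |(κ_n+κ_m)/(κ_n−κ_m)| for n = 1,…,N. Define A(x) = Σ_{I ⊆ {1,…,N}} ∏_{i,j∈I, i<j} ((κ_i−κ_j)²/(κ_i+κ_j)²) ∏_{i∈I} q_i e^{−2κ_i x}. Then the function u(x) = −2 (d²/dx²) log A(x) is even: u(−x) = u(x) for all x ∈ ℝ. -/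
open Finset

/-- A double product over a set splits into the pairs `i < j`, if the diagonal is trivial. -/
lemma prod_prod_split {N : ℕ} (I : Finset (Fin N)) (b : Fin N → Fin N → ℝ)
    (hd : ∀ i, b i i = 1) :
    ∏ i ∈ I, ∏ j ∈ I, b i j
      = ∏ i ∈ I, ∏ j ∈ I.filter (fun j => i < j), (b i j * b j i) := by
  have h1 : ∀ i ∈ I, ∏ j ∈ I, b i j
      = (∏ j ∈ I, if i < j then b i j else 1) * ∏ j ∈ I, if j < i then b i j else 1 := by
    intro i _
    rw [← Finset.prod_mul_distrib]
    refine Finset.prod_congr rfl fun j _ => ?_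
    rcases lt_trichotomy i j with h | h | h
    · simp [h, h.not_gt]
    · subst h; simp [hd]
    · simp [h, h.not_gt]
  rw [Finset.prod_congr rfl h1, Finset.prod_mul_distrib]
  conv_lhs => rw [Finset.prod_comm (f := fun i j => if j < i then b i j else 1)]
  rw [← Finset.prod_mul_distrib]
  refine Finset.prod_congr rfl fun i _ => ?_
  rw [Finset.prod_filter, ← Finset.prod_mul_distrib]
  refine Finset.prod_congr rfl fun j _ => ?_
  split_ifs <;> simp

lemma coeff_eq {N : ℕ} (κ : Fin N → ℝ)
    (hpos : ∀ n, 0 < κ n) (hinj : Function.Injective κ) (q : Fin N → ℝ)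
    (hq : ∀ n, q n = ∏ m ∈ univ.erase n, |(κ n + κ m) / (κ n - κ m)|)
    (I : Finset (Fin N)) :
    (∏ i ∈ I, ∏ j ∈ I.filter (fun j => i < j),
      ((κ i - κ j) ^ 2 / (κ i + κ j) ^ 2)) * ∏ i ∈ I, q i
      = ∏ i ∈ I, ∏ j ∈ Iᶜ, |(κ i + κ j) / (κ i - κ j)| := by
  set b : Fin N → Fin N → ℝ :=
    fun i j => if i = j then 1 else |(κ i + κ j) / (κ i - κ j)| with hb
  have hq' : ∀ i, q i = (∏ j ∈ I, b i j) * ∏ j ∈ Iᶜ, b i j := by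
    intro i
    rw [Finset.prod_mul_prod_compl, hq, ← Finset.mul_prod_erase univ (b i) (mem_univ i)]
    simp only [hb, if_true, one_mul]
    refine Finset.prod_congr rfl fun j hj => ?_
    rw [if_neg (Finset.ne_of_mem_erase hj).symm]
  simp only [hq']
  rw [Finset.prod_mul_distrib, prod_prod_split I b (by simp [hb]), ← mul_assoc,
    ← Finset.prod_mul_distrib]
  have h1 : ∏ i ∈ I, ((∏ j ∈ I.filter (fun j => i < j),
      ((κ i - κ j) ^ 2 / (κ i + κ j) ^ 2)) *
      ∏ j ∈ I.filter (fun j => i < j), (b i j * b j i)) = 1 := by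
    refine Finset.prod_eq_one fun i _ => ?_
    rw [← Finset.prod_mul_distrib]
    refine Finset.prod_eq_one fun j hj => ?_
    have hij : i ≠ j := (Finset.mem_filter.1 hj).2.ne
    have hs : κ i - κ j ≠ 0 := sub_ne_zero.2 fun h => hij (hinj h)
    have hp : κ i + κ j ≠ 0 := (add_pos (hpos i) (hpos j)).ne'
    have hbb : b j i = b i j := by
      simp only [hb, if_neg hij, if_neg hij.symm]
      rw [abs_div, abs_div, abs_sub_comm, add_comm]
    rw [hbb, ← sq]
    simp only [hb, if_neg hij, sq_abs]
    field_simp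
  rw [h1, one_mul]
  refine Finset.prod_congr rfl fun i hi => Finset.prod_congr rfl fun j hj => ?_
  have hij : i ≠ j := by
    rintro rfl
    exact (Finset.mem_compl.1 hj) hi
  simp [hb, hij]

/-- For the symmetric choice of phases `q_n = ∏_{m≠n} |(κ_n+κ_m)/(κ_n−κ_m)|`,
the `N`-soliton potential `u = -2 (log A)''` is an even function. -/
theorem symmetric_nsoliton_potential_is_even (N : ℕ) (hN : 0 < N) (κ : Fin N → ℝ)
    (hpos : ∀ n, 0 < κ n) (hinj : Function.Injective κ)
    (q : Fin N → ℝ)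
    (hq : ∀ n, q n = ∏ m ∈ univ.erase n, |(κ n + κ m) / (κ n - κ m)|)
    (A : ℝ → ℝ)
    (hA : A = fun x => ∑ I : Finset (Fin N),
        (∏ i ∈ I, ∏ j ∈ I.filter (fun j => i < j),
            ((κ i - κ j) ^ 2 / (κ i + κ j) ^ 2)) *
          ∏ i ∈ I, q i * Real.exp (-2 * κ i * x))
    (u : ℝ → ℝ)
    (hu : u = fun x => -2 * iteratedDeriv 2 (fun y => Real.log (A y)) x) :
    ∀ x : ℝ, u (-x) = u x := by
  have hAx : ∀ x, A x = ∑ I : Finset (Fin N),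
      (∏ i ∈ I, ∏ j ∈ Iᶜ, |(κ i + κ j) / (κ i - κ j)|) *
        Real.exp (-2 * (∑ i ∈ I, κ i) * x) := by
    intro x
    rw [hA]
    refine Finset.sum_congr rfl fun I _ => ?_
    rw [Finset.prod_mul_distrib, ← mul_assoc, coeff_eq κ hpos hinj q hq I, ← Real.exp_sum,
      Finset.mul_sum, Finset.sum_mul]
  have hrefl : ∀ x, A (-x) = Real.exp (2 * (∑ i, κ i) * x) * A x := by
    intro x
    rw [hAx, hAx, Finset.mul_sum]
    refine Fintype.sum_equiv (Equiv.ofBijective _ compl_bijective) _ _ fun I => ?_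
    simp only [Equiv.ofBijective_apply, compl_compl]
    rw [Finset.prod_comm, mul_left_comm, ← Real.exp_add, ← Finset.sum_add_sum_compl I κ]
    congr 1
    · refine Finset.prod_congr rfl fun i _ => Finset.prod_congr rfl fun j _ => ?_
      rw [abs_div, abs_div, abs_sub_comm, add_comm]
    · congr 1
      ring
  have hApos : ∀ x, 0 < A x := by
    intro x
    rw [hAx]
    refine Finset.sum_pos (fun I _ => ?_) univ_nonempty
    refine mul_pos (Finset.prod_pos fun i hi => Finset.prod_pos fun j hj => ?_) (Real.exp_pos _)
    have hij : i ≠ j := by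
      rintro rfl
      exact (Finset.mem_compl.1 hj) hi
    exact abs_pos.2 (div_ne_zero (add_pos (hpos i) (hpos j)).ne'
      (sub_ne_zero.2 fun h => hij (hinj h)))
  have hAd : Differentiable ℝ A := by
    rw [funext hAx]
    fun_prop
  have hL : Differentiable ℝ (fun y => Real.log (A y)) :=
    fun y => (hAd y).log (hApos y).ne'
  intro x
  have h2 : iteratedDeriv 2 (fun y => Real.log (A (-y))) x
      = iteratedDeriv 2 (fun y => Real.log (A y)) (-x) := by
    have := iteratedDeriv_comp_neg 2 (fun y => Real.log (A y)) x
    simpa using this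
  have h3 : (fun y => Real.log (A (-y)))
      = fun y => 2 * (∑ i, κ i) * y + Real.log (A y) := by
    funext y
    rw [hrefl, Real.log_mul (Real.exp_pos _).ne' (hApos y).ne', Real.log_exp]
  have h4 : deriv (fun y => 2 * (∑ i, κ i) * y + Real.log (A y))
      = fun y => 2 * (∑ i, κ i) + deriv (fun y => Real.log (A y)) y := by
    funext y
    have h5 : HasDerivAt (fun y : ℝ => 2 * (∑ i, κ i) * y) (2 * (∑ i, κ i)) y := by
      simpa using (hasDerivAt_id y).const_mul (2 * (∑ i, κ i))
    exact (h5.add (hL y).hasDerivAt).deriv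
  rw [hu]
  simp only
  rw [← h2, h3, iteratedDeriv_succ, iteratedDeriv_one, h4, iteratedDeriv_succ, iteratedDeriv_one,
    deriv_const_add]
end

section
/- Let A < B be real numbers, let f : [A,B] → ℝ be Hölder continuous with exponent γ ∈ (0,1] (i.e., there is C ≥ 0 with |f(r)−f(r')| ≤ C|r−r'|^γ for all r, r' ∈ [A,B]), and let s ∈ (A,B). Then the limit lim_{ε→0⁺} ( ∫_A^{s−ε} f(r)/(r−s) dr + ∫_{s+ε}^B f(r)/(r−s) dr ) exists (is a real number). -/
open Filter Topology intervalIntegral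

/-- For a Hölder continuous function `f` on `[A,B]` and `s ∈ (A,B)`, the principal
value integral `PV ∫_A^B f(r)/(r−s) dr` exists. -/
theorem pv_integral_exists_of_holder (A B : ℝ) (hAB : A < B) (f : ℝ → ℝ)
    (γ : ℝ) (hγ : γ ∈ Set.Ioc (0 : ℝ) 1) (C : ℝ) (hC : 0 ≤ C)
    (hf : ∀ r ∈ Set.Icc A B, ∀ r' ∈ Set.Icc A B, |f r - f r'| ≤ C * |r - r'| ^ γ)
    (s : ℝ) (hs : s ∈ Set.Ioo A B) :
    ∃ L : ℝ, Tendsto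
      (fun ε : ℝ => (∫ r in A..(s - ε), f r / (r - s)) + ∫ r in (s + ε)..B, f r / (r - s))
      (𝓝[>] 0) (𝓝 L) := by
  obtain ⟨hγ0, hγ1⟩ := hγ
  obtain ⟨hAs, hsB⟩ := hs
  have hsI : s ∈ Set.Icc A B := ⟨hAs.le, hsB.le⟩
  have hcont : ContinuousOn f (Set.Icc A B) := by
    intro x hx
    rw [ContinuousWithinAt, tendsto_iff_dist_tendsto_zero]
    have h1 : Tendsto (fun r : ℝ => C * |r - x| ^ γ) (𝓝[Set.Icc A B] x) (𝓝 0) := by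
      have : Continuous (fun r : ℝ => C * |r - x| ^ γ) :=
        continuous_const.mul
          ((continuous_id.sub continuous_const).abs.rpow_const (fun _ => Or.inr hγ0.le))
      have h2 := (this.tendsto x).mono_left (nhdsWithin_le_nhds (s := Set.Icc A B))
      simpa [Real.zero_rpow hγ0.ne'] using h2
    refine squeeze_zero' (Eventually.of_forall fun _ => dist_nonneg) ?_ h1
    filter_upwards [self_mem_nhdsWithin] with r hr
    rw [Real.dist_eq]
    exact hf r hr x hx
  set g : ℝ → ℝ := fun r => (f r - f s) / (r - s) with hg
  have hmeas : MeasureTheory.AEStronglyMeasurable g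
      (MeasureTheory.volume.restrict (Set.Icc A B)) := by
    have h1 : MeasureTheory.AEStronglyMeasurable (fun r => f r - f s)
        (MeasureTheory.volume.restrict (Set.Icc A B)) :=
      (hcont.sub continuousOn_const).aestronglyMeasurable measurableSet_Icc
    have h2 : Measurable (fun r : ℝ => (r - s)⁻¹) := by fun_prop
    exact h1.mul h2.aestronglyMeasurable
  have hbound : ∀ r ∈ Set.Icc A B, r ≠ s → ‖g r‖ ≤ C * |r - s| ^ (γ - 1) := by
    intro r hr hne
    have hpos : 0 < |r - s| := abs_pos.2 (sub_ne_zero.2 hne)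
    rw [hg, Real.norm_eq_abs, abs_div, Real.rpow_sub_one hpos.ne', ← mul_div_assoc]
    exact div_le_div_of_nonneg_right (hf r hr s hsI) hpos.le
  have hgl : IntervalIntegrable g MeasureTheory.volume A s := by
    have h0 : IntervalIntegrable (fun x : ℝ => x ^ (γ - 1)) MeasureTheory.volume (s - A) 0 :=
      intervalIntegrable_rpow' (by linarith)
    have h1 : IntervalIntegrable (fun r : ℝ => C * (s - r) ^ (γ - 1)) MeasureTheory.volume A s := by
      have := h0.comp_sub_left s
      simp only [sub_sub_cancel, sub_zero] at this
      exact this.const_mul C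
    refine h1.mono_fun (hmeas.mono_measure (MeasureTheory.Measure.restrict_mono ?_ le_rfl)) ?_
    · rw [Set.uIoc_of_le hAs.le]
      exact fun x hx => ⟨hx.1.le, hx.2.trans hsB.le⟩
    · rw [Set.uIoc_of_le hAs.le]
      have hne : ∀ᵐ r : ℝ ∂(MeasureTheory.volume.restrict (Set.Ioc A s)), r ≠ s :=
        MeasureTheory.ae_restrict_of_ae (MeasureTheory.Measure.ae_ne _ s)
      filter_upwards [hne, MeasureTheory.ae_restrict_mem measurableSet_Ioc] with r hr hr2
      have := hbound r ⟨hr2.1.le, hr2.2.trans hsB.le⟩ hr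
      rw [abs_sub_comm, abs_of_nonneg (sub_nonneg.2 hr2.2)] at this
      exact this.trans (le_abs_self _)
  have hgr : IntervalIntegrable g MeasureTheory.volume s B := by
    have h0 : IntervalIntegrable (fun x : ℝ => x ^ (γ - 1)) MeasureTheory.volume 0 (B - s) :=
      intervalIntegrable_rpow' (by linarith)
    have h1 : IntervalIntegrable (fun r : ℝ => C * (r - s) ^ (γ - 1)) MeasureTheory.volume s B := by
      have := h0.comp_sub_right s
      simp only [sub_add_cancel, zero_add] at this
      exact this.const_mul C
    refine h1.mono_fun (hmeas.mono_measure (MeasureTheory.Measure.restrict_mono ?_ le_rfl)) ?_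
    · rw [Set.uIoc_of_le hsB.le]
      exact fun x hx => ⟨hAs.le.trans hx.1.le, hx.2⟩
    · rw [Set.uIoc_of_le hsB.le]
      filter_upwards [MeasureTheory.ae_restrict_mem measurableSet_Ioc] with r hr2
      have := hbound r ⟨hAs.le.trans hr2.1.le, hr2.2⟩ hr2.1.ne'
      rw [abs_of_nonneg (sub_nonneg.2 hr2.1.le)] at this
      exact this.trans (le_abs_self _)
  have hgAB := hgl.trans hgr
  have hcp : ContinuousOn (fun x => ∫ t in A..x, g t) (Set.Icc A B) := by
    have := continuousOn_primitive_interval' hgAB Set.left_mem_uIcc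
    rwa [Set.uIcc_of_le hAB.le] at this
  have hcs : ContinuousAt (fun x => ∫ t in A..x, g t) s :=
    hcp.continuousAt (Icc_mem_nhds hAs hsB)
  have t1 : Tendsto (fun ε : ℝ => ∫ t in A..(s - ε), g t) (𝓝[>] 0) (𝓝 (∫ t in A..s, g t)) := by
    have : Tendsto (fun ε : ℝ => s - ε) (𝓝[>] 0) (𝓝 s) := by
      have : Continuous (fun ε : ℝ => s - ε) := by fun_prop
      simpa using (this.tendsto 0).mono_left nhdsWithin_le_nhds
    exact hcs.tendsto.comp this
  have t2 : Tendsto (fun ε : ℝ => ∫ t in A..(s + ε), g t) (𝓝[>] 0) (𝓝 (∫ t in A..s, g t)) := by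
    have : Tendsto (fun ε : ℝ => s + ε) (𝓝[>] 0) (𝓝 s) := by
      have : Continuous (fun ε : ℝ => s + ε) := by fun_prop
      simpa using (this.tendsto 0).mono_left nhdsWithin_le_nhds
    exact hcs.tendsto.comp this
  refine ⟨_, Tendsto.congr' ?_ ((t1.add (t2.const_sub (∫ t in A..B, g t))).add_const
    (f s * (Real.log (B - s) - Real.log (s - A))))⟩
  have e1 : ∀ᶠ ε : ℝ in 𝓝[>] 0, ε < s - A :=
    nhdsWithin_le_nhds (Iio_mem_nhds (sub_pos.2 hAs))
  have e2 : ∀ᶠ ε : ℝ in 𝓝[>] 0, ε < B - s :=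
    nhdsWithin_le_nhds (Iio_mem_nhds (sub_pos.2 hsB))
  filter_upwards [self_mem_nhdsWithin, e1, e2] with ε hε h1 h2
  have hε : 0 < ε := hε
  -- general splitting on an interval avoiding `s`
  have key : ∀ a b : ℝ, a ≤ b → a ∈ Set.Icc A B → b ∈ Set.Icc A B → s ∉ Set.Icc a b →
      ∫ r in a..b, f r / (r - s) = (∫ r in a..b, g r) + f s * Real.log ((b - s) / (a - s)) := by
    intro a b hab ha hb hsn
    have hi : IntervalIntegrable g MeasureTheory.volume a b :=
      hgAB.mono_set (by
        rw [Set.uIcc_of_le hab, Set.uIcc_of_le hAB.le]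
        exact Set.Icc_subset_Icc ha.1 hb.2)
    have hne : ∀ r ∈ Set.uIcc a b, r - s ≠ 0 := by
      intro r hr h
      rw [Set.uIcc_of_le hab] at hr
      have : r = s := by linarith
      exact hsn (this ▸ hr)
    have hj : IntervalIntegrable (fun r : ℝ => f s * (r - s)⁻¹) MeasureTheory.volume a b := by
      apply ContinuousOn.intervalIntegrable
      exact continuousOn_const.mul
        ((continuousOn_id.sub continuousOn_const).inv₀ hne)
    have hlog : ∫ r in a..b, (r - s)⁻¹ = Real.log ((b - s) / (a - s)) := by
      rw [integral_comp_sub_right (fun x : ℝ => x⁻¹) s, integral_inv]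
      rw [Set.uIcc_of_le (by linarith)]
      intro h
      exact hsn ⟨by linarith [h.1], by linarith [h.2]⟩
    rw [← hlog, ← integral_const_mul, ← integral_add hi hj]
    apply integral_congr
    intro r hr
    have := hne r hr
    simp only [hg]
    field_simp
    ring
  rw [key A (s - ε) (by linarith) ⟨le_rfl, hAB.le⟩ ⟨by linarith, by linarith⟩
      (fun h => by linarith [h.2]),
    key (s + ε) B (by linarith) ⟨by linarith, by linarith⟩ ⟨hAB.le, le_rfl⟩
      (fun h => by linarith [h.1])]
  have hsplit : (∫ t in A..B, g t) - ∫ t in A..(s + ε), g t = ∫ t in (s + ε)..B, g t := by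
    apply integral_interval_sub_left hgAB
    refine hgAB.mono_set ?_
    rw [Set.uIcc_of_le (by linarith), Set.uIcc_of_le hAB.le]
    exact Set.Icc_subset_Icc le_rfl (by linarith)
  rw [hsplit]
  have l1 : Real.log ((s - ε - s) / (A - s)) = Real.log ε - Real.log (s - A) := by
    rw [← Real.log_div hε.ne' (by linarith), ← neg_div_neg_eq]
    congr 2 <;> ring
  have l2 : Real.log ((B - s) / (s + ε - s)) = Real.log (B - s) - Real.log ε := by
    rw [add_sub_cancel_left, Real.log_div (by linarith) hε.ne']
  rw [l1, l2]
  ring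
end

section
/- Let A < B be real numbers, let f : [A,B] → ℝ be Hölder continuous with exponent γ ∈ (0,1], and let s ∈ (A,B). Then lim_{ε→0⁺} ∫_A^B f(r)/(r − s − iε) dr = PV ∫_A^B f(r)/(r−s) dr + iπ f(s), and lim_{ε→0⁺} ∫_A^B f(r)/(r − s + iε) dr = PV ∫_A^B f(r)/(r−s) dr − iπ f(s), where the integrals on the left are complex-valued Lebesgue integrals. -/
open Filter Topology intervalIntegral Complex

lemma sp_cont (A B : ℝ) (f : ℝ → ℝ)
    (γ : ℝ) (hγ : γ ∈ Set.Ioc (0 : ℝ) 1) (C : ℝ)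
    (hf : ∀ r ∈ Set.Icc A B, ∀ r' ∈ Set.Icc A B, |f r - f r'| ≤ C * |r - r'| ^ γ) :
    ContinuousOn f (Set.Icc A B) := by
  intro x hx
  rw [ContinuousWithinAt, tendsto_iff_dist_tendsto_zero]
  have h0 : Tendsto (fun r : ℝ => C * |r - x| ^ γ) (𝓝[Set.Icc A B] x) (𝓝 0) := by
    have : Continuous (fun r : ℝ => C * |r - x| ^ γ) :=
      continuous_const.mul ((continuous_id.sub continuous_const).abs.rpow_const
        (fun _ => Or.inr hγ.1.le))
    have h := (this.tendsto x).mono_left (nhdsWithin_le_nhds (s := Set.Icc A B))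
    simpa [Real.zero_rpow hγ.1.ne'] using h
  refine squeeze_zero' (Eventually.of_forall fun _ => dist_nonneg) ?_ h0
  filter_upwards [self_mem_nhdsWithin] with r hr
  rw [Real.dist_eq]
  exact hf r hr x hx

lemma sp_bound_int (A B γ s : ℝ) (hγ : 0 < γ) (hs : s ∈ Set.Ioo A B) :
    IntervalIntegrable (fun r => |r - s| ^ (γ - 1)) MeasureTheory.volume A B := by
  have h1 : IntervalIntegrable (fun r => |r - s| ^ (γ - 1)) MeasureTheory.volume s B := by
    have h := (intervalIntegrable_rpow' (a := 0) (b := B - s) (r := γ - 1)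
      (by linarith)).comp_sub_right s
    simp only [zero_add, sub_add_cancel] at h
    refine h.congr ?_
    intro r hr
    rw [Set.uIoc_of_le hs.2.le] at hr
    simp only
    rw [abs_of_pos (by linarith [hr.1])]
  have h2 : IntervalIntegrable (fun r => |r - s| ^ (γ - 1)) MeasureTheory.volume A s := by
    have h := (intervalIntegrable_rpow' (a := s - A) (b := 0) (r := γ - 1)
      (by linarith)).comp_sub_left s
    simp only [sub_sub_cancel, sub_zero] at h
    refine h.congr ?_
    intro r hr
    rw [Set.uIoc_of_le hs.1.le] at hr
    simp only
    rw [abs_of_nonpos (by linarith [hr.2]), neg_sub]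
  exact h2.trans h1

lemma sp_log (A B s : ℝ) (hs : s ∈ Set.Ioo A B) :
    Tendsto (fun ε : ℝ => ∫ r in A..B, ((r : ℂ) - (s : ℂ) - (ε : ℂ) * Complex.I)⁻¹) (𝓝[>] 0)
      (𝓝 (((Real.log (B - s) - Real.log (s - A) : ℝ) : ℂ) + (Real.pi : ℂ) * Complex.I)) := by
  have h1 : ∀ ε > (0 : ℝ), ∫ r in A..B, ((r : ℂ) - (s : ℂ) - (ε : ℂ) * Complex.I)⁻¹ =
      Complex.log ((B : ℂ) - s - ε * Complex.I) - Complex.log ((A : ℂ) - s - ε * Complex.I) := by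
    intro ε hε
    have hne : ∀ r : ℝ, (r : ℂ) - (s : ℂ) - (ε : ℂ) * Complex.I ∈ Complex.slitPlane := by
      intro r
      rw [Complex.mem_slitPlane_iff]
      right
      simp [hε.ne']
    refine integral_eq_sub_of_hasDerivAt
      (f := fun r : ℝ => Complex.log ((r : ℂ) - s - ε * Complex.I)) ?_ ?_
    · intro r _
      have h : HasDerivAt (fun r : ℝ => (r : ℂ) - s - ε * Complex.I) 1 r :=
        ((Complex.ofRealCLM.hasDerivAt (x := r)).sub_const _).sub_const _
      simpa using h.clog_real (hne r)
    · apply Continuous.intervalIntegrable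
      apply Continuous.inv₀
      · fun_prop
      · intro r
        exact Complex.slitPlane_ne_zero (hne r)
  have hc : ∀ x : ℝ, Tendsto (fun ε : ℝ => (x : ℂ) - s - ε * Complex.I) (𝓝[>] 0)
      (𝓝 ((x - s : ℝ) : ℂ)) := by
    intro x
    have : Continuous (fun ε : ℝ => (x : ℂ) - s - ε * Complex.I) := by fun_prop
    have h := (this.tendsto 0).mono_left (nhdsWithin_le_nhds (s := Set.Ioi 0))
    simpa using h
  have hB : Tendsto (fun ε : ℝ => Complex.log ((B : ℂ) - s - ε * Complex.I)) (𝓝[>] 0)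
      (𝓝 ((Real.log (B - s) : ℝ) : ℂ)) := by
    have hp : 0 < B - s := by linarith [hs.2]
    rw [Complex.ofReal_log hp.le]
    exact (hc B).clog (Complex.ofReal_mem_slitPlane.2 hp)
  have hA : Tendsto (fun ε : ℝ => Complex.log ((A : ℂ) - s - ε * Complex.I)) (𝓝[>] 0)
      (𝓝 ((Real.log (s - A) : ℝ) - Real.pi * Complex.I)) := by
    have hn : A - s < 0 := by linarith [hs.1]
    have h := Complex.tendsto_log_nhdsWithin_im_neg_of_re_neg_of_im_zero
      (z := ((A - s : ℝ) : ℂ)) (by simpa using hs.1) (by simp)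
    have e : ‖((A - s : ℝ) : ℂ)‖ = s - A := by
      rw [Complex.norm_real, Real.norm_eq_abs, abs_of_neg hn, neg_sub]
    rw [e] at h
    refine h.comp (tendsto_nhdsWithin_iff.2 ⟨hc A, ?_⟩)
    filter_upwards [self_mem_nhdsWithin] with ε hε
    simpa using hε
  have h := hB.sub hA
  have e : ((Real.log (B - s) : ℝ) : ℂ) - ((Real.log (s - A) : ℝ) - Real.pi * Complex.I) =
    ((Real.log (B - s) - Real.log (s - A) : ℝ) : ℂ) + (Real.pi : ℂ) * Complex.I := by
    push_cast; ring
  rw [e] at h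
  refine h.congr' ?_
  filter_upwards [self_mem_nhdsWithin] with ε hε
  exact (h1 ε hε).symm

/-- Sokhotski–Plemelj formula on a finite interval: for Hölder continuous `f` and
`s ∈ (A,B)`, `lim_{ε→0⁺} ∫_A^B f(r)/(r−s∓iε) dr = PV ∫_A^B f(r)/(r−s) dr ± iπ f(s)`. -/
theorem sokhotski_plemelj (A B : ℝ) (hAB : A < B) (f : ℝ → ℝ)
    (γ : ℝ) (hγ : γ ∈ Set.Ioc (0 : ℝ) 1) (C : ℝ) (hC : 0 ≤ C)
    (hf : ∀ r ∈ Set.Icc A B, ∀ r' ∈ Set.Icc A B, |f r - f r'| ≤ C * |r - r'| ^ γ)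
    (s : ℝ) (hs : s ∈ Set.Ioo A B) :
    ∃ P : ℝ,
      Tendsto (fun ε : ℝ =>
          (∫ r in A..(s - ε), f r / (r - s)) + ∫ r in (s + ε)..B, f r / (r - s))
        (𝓝[>] 0) (𝓝 P) ∧
      Tendsto (fun ε : ℝ =>
          ∫ r in A..B, (f r : ℂ) / ((r : ℂ) - (s : ℂ) - (ε : ℂ) * Complex.I))
        (𝓝[>] 0) (𝓝 ((P : ℂ) + (Real.pi : ℂ) * (f s : ℂ) * Complex.I)) ∧
      Tendsto (fun ε : ℝ =>
          ∫ r in A..B, (f r : ℂ) / ((r : ℂ) - (s : ℂ) + (ε : ℂ) * Complex.I))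
        (𝓝[>] 0) (𝓝 ((P : ℂ) - (Real.pi : ℂ) * (f s : ℂ) * Complex.I)) := by
  have hcont := sp_cont A B f γ hγ C hf
  have hsI : s ∈ Set.Icc A B := ⟨hs.1.le, hs.2.le⟩
  have hbi := (sp_bound_int A B γ s hγ.1 hs).const_mul C
  have hfm : MeasureTheory.AEStronglyMeasurable f
      (MeasureTheory.volume.restrict (Set.uIoc A B)) := by
    rw [Set.uIoc_of_le hAB.le]
    exact (hcont.mono Set.Ioc_subset_Icc_self).aestronglyMeasurable measurableSet_Ioc
  -- pointwise bound
  have hb : ∀ r ∈ Set.Icc A B, |f r - f s| / |r - s| ≤ C * |r - s| ^ (γ - 1) := by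
    intro r hr
    rcases eq_or_ne r s with rfl | hne
    · simp only [sub_self, abs_zero, div_zero]
      positivity
    · have hp : 0 < |r - s| := abs_pos.2 (sub_ne_zero.2 hne)
      rw [Real.rpow_sub_one hp.ne', ← mul_div_assoc]
      gcongr
      exact hf r hr s hsI
  have hgi : IntervalIntegrable (fun r => (f r - f s) / (r - s)) MeasureTheory.volume A B := by
    refine hbi.mono_fun' ?_ ?_
    · have hm : AEMeasurable (fun r : ℝ => r - s)
          (MeasureTheory.volume.restrict (Set.uIoc A B)) := by fun_prop
      exact ((hfm.aemeasurable.sub_const (f s)).div hm).aestronglyMeasurable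
    · rw [Set.uIoc_of_le hAB.le]
      filter_upwards [MeasureTheory.ae_restrict_mem measurableSet_Ioc] with r hr
      rw [Real.norm_eq_abs, abs_div]
      exact hb r (Set.Ioc_subset_Icc_self hr)
  set g : ℝ → ℝ := fun r => (f r - f s) / (r - s) with hg
  set L : ℝ := Real.log (B - s) - Real.log (s - A) with hL
  have h2 : Tendsto (fun ε : ℝ =>
          ∫ r in A..B, (f r : ℂ) / ((r : ℂ) - (s : ℂ) - (ε : ℂ) * Complex.I))
        (𝓝[>] 0) (𝓝 (((∫ r in A..B, g r) + f s * L : ℝ) +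
          (Real.pi : ℂ) * (f s : ℂ) * Complex.I)) := by
    have hd : Tendsto (fun ε : ℝ =>
          ∫ r in A..B, ((f r - f s : ℝ) : ℂ) / ((r : ℂ) - (s : ℂ) - (ε : ℂ) * Complex.I))
        (𝓝[>] 0) (𝓝 (∫ r in A..B, (g r : ℂ))) := by
      refine tendsto_integral_filter_of_dominated_convergence
        (fun r => C * |r - s| ^ (γ - 1)) ?_ ?_ hbi ?_
      · refine Eventually.of_forall fun ε => ?_
        have h1 : AEMeasurable (fun r => ((f r - f s : ℝ) : ℂ))
            (MeasureTheory.volume.restrict (Set.uIoc A B)) :=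
          Complex.measurable_ofReal.comp_aemeasurable (hfm.aemeasurable.sub_const (f s))
        have h2 : Measurable (fun r : ℝ => (r : ℂ) - (s : ℂ) - (ε : ℂ) * Complex.I) := by
          fun_prop
        exact (h1.div h2.aemeasurable).aestronglyMeasurable
      · refine Eventually.of_forall fun ε => Eventually.of_forall fun r hr => ?_
        rw [Set.uIoc_of_le hAB.le] at hr
        refine le_trans ?_ (hb r (Set.Ioc_subset_Icc_self hr))
        rw [norm_div, Complex.norm_real, Real.norm_eq_abs]
        rcases eq_or_ne r s with rfl | hne
        · simp
        · have hp : 0 < |r - s| := abs_pos.2 (sub_ne_zero.2 hne)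
          gcongr
          have := Complex.abs_re_le_norm ((r : ℂ) - (s : ℂ) - (ε : ℂ) * Complex.I)
          simpa using this
      · refine Eventually.of_forall fun r _ => ?_
        rcases eq_or_ne r s with rfl | hne
        · simp [hg]
        · have hz : (r : ℂ) - s ≠ 0 := by
            exact_mod_cast sub_ne_zero.2 hne
          have hc : Tendsto (fun ε : ℝ => (r : ℂ) - s - ε * Complex.I) (𝓝[>] 0)
              (𝓝 ((r : ℂ) - s)) := by
            have : Continuous (fun ε : ℝ => (r : ℂ) - s - ε * Complex.I) := by fun_prop
            have h := (this.tendsto 0).mono_left (nhdsWithin_le_nhds (s := Set.Ioi 0))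
            simpa using h
          have := (tendsto_const_nhds (x := ((f r - f s : ℝ) : ℂ))).div hc hz
          simpa [hg, Pi.div_def] using this
    have hl := (sp_log A B s hs).const_mul (f s : ℂ)
    have hsum := hd.add hl
    have e : (∫ r in A..B, (g r : ℂ)) + (f s : ℂ) * ((L : ℝ) + (Real.pi : ℂ) * Complex.I) =
        (((∫ r in A..B, g r) + f s * L : ℝ) : ℂ) + (Real.pi : ℂ) * (f s : ℂ) * Complex.I := by
      rw [intervalIntegral.integral_ofReal]
      push_cast
      ring
    rw [e] at hsum
    refine hsum.congr' ?_
    filter_upwards [self_mem_nhdsWithin] with ε hε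
    have hε' : (0 : ℝ) < ε := hε
    have hne : ∀ r : ℝ, (r : ℂ) - (s : ℂ) - (ε : ℂ) * Complex.I ≠ 0 := by
      intro r h
      have := congrArg Complex.im h
      simp at this
      exact hε'.ne' this
    have hci : Continuous (fun r : ℝ => ((r : ℂ) - (s : ℂ) - (ε : ℂ) * Complex.I)⁻¹) :=
      Continuous.inv₀ (by fun_prop) hne
    rw [← intervalIntegral.integral_const_mul, ← intervalIntegral.integral_add]
    · congr 1
      ext r
      push_cast
      have := hne r
      field_simp
      ring
    · apply ContinuousOn.intervalIntegrable
      rw [Set.uIcc_of_le hAB.le]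
      have h1 : ContinuousOn (fun r => ((f r - f s : ℝ) : ℂ)) (Set.Icc A B) :=
        Complex.continuous_ofReal.comp_continuousOn (hcont.sub continuousOn_const)
      simp only [div_eq_mul_inv]
      exact h1.mul hci.continuousOn
    · exact (continuous_const.mul hci).intervalIntegrable _ _
  refine ⟨(∫ r in A..B, g r) + f s * L, ?_, h2, ?_⟩
  · have hgm : ∀ a ∈ Set.Icc A B, ∀ b ∈ Set.Icc A B,
        IntervalIntegrable g MeasureTheory.volume a b := by
      intro a ha b hb
      apply hgi.mono_set
      rw [Set.uIcc_of_le hAB.le]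
      exact Set.uIcc_subset_Icc ha hb
    have hprim : ContinuousOn (fun x => ∫ r in A..x, g r) (Set.uIcc A B) :=
      intervalIntegral.continuousOn_primitive_interval' hgi Set.left_mem_uIcc
    have hat : Tendsto (fun x => ∫ r in A..x, g r) (𝓝 s) (𝓝 (∫ r in A..s, g r)) := by
      apply (hprim.continuousAt _).tendsto
      rw [Set.uIcc_of_le hAB.le]
      exact Icc_mem_nhds hs.1 hs.2
    have ht1 : Tendsto (fun ε : ℝ => s - ε) (𝓝[>] 0) (𝓝 s) := by
      have : Continuous (fun ε : ℝ => s - ε) := by fun_prop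
      simpa using (this.tendsto 0).mono_left (nhdsWithin_le_nhds (s := Set.Ioi 0))
    have ht2 : Tendsto (fun ε : ℝ => s + ε) (𝓝[>] 0) (𝓝 s) := by
      have : Continuous (fun ε : ℝ => s + ε) := by fun_prop
      simpa using (this.tendsto 0).mono_left (nhdsWithin_le_nhds (s := Set.Ioi 0))
    have hT := ((hat.comp ht1).add ((tendsto_const_nhds (x := ∫ r in A..B, g r)).sub
      (hat.comp ht2))).add_const (f s * L)
    rw [add_sub_cancel] at hT
    refine hT.congr' ?_
    have hpos : 0 < min (s - A) (B - s) := lt_min (by linarith [hs.1]) (by linarith [hs.2])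
    filter_upwards [Ioo_mem_nhdsGT hpos] with ε hε
    have he0 : 0 < ε := hε.1
    have he1 : ε < s - A := lt_of_lt_of_le hε.2 (min_le_left _ _)
    have he2 : ε < B - s := lt_of_lt_of_le hε.2 (min_le_right _ _)
    have key : ∀ a ∈ Set.Icc A B, ∀ b ∈ Set.Icc A B, s ∉ Set.uIcc a b →
        ∫ r in a..b, f r / (r - s) =
          (∫ r in a..b, g r) + f s * Real.log ((b - s) / (a - s)) := by
      intro a ha b hb hn
      have hn' : (0 : ℝ) ∉ Set.uIcc (a - s) (b - s) := by
        intro h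
        apply hn
        rw [Set.mem_uIcc] at h ⊢
        rcases h with h | h
        · left; constructor <;> linarith [h.1, h.2]
        · right; constructor <;> linarith [h.1, h.2]
      have hne : ∀ r ∈ Set.uIcc a b, r - s ≠ 0 := by
        intro r hr h
        apply hn
        rwa [← sub_eq_zero.1 h]
      have hi : ∫ r in a..b, (r - s)⁻¹ = Real.log ((b - s) / (a - s)) := by
        rw [intervalIntegral.integral_comp_sub_right (fun x => x⁻¹) s, integral_inv hn']
      rw [← hi, ← intervalIntegral.integral_const_mul, ← intervalIntegral.integral_add]
      · apply intervalIntegral.integral_congr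
        intro r hr
        have := hne r hr
        simp only [hg]
        field_simp
        ring
      · exact hgm a ha b hb
      · apply ContinuousOn.intervalIntegrable
        exact continuousOn_const.mul (ContinuousOn.inv₀ (by fun_prop) hne)
    have hAm : A ∈ Set.Icc A B := ⟨le_rfl, hAB.le⟩
    have hBm : B ∈ Set.Icc A B := ⟨hAB.le, le_rfl⟩
    have hm1 : s - ε ∈ Set.Icc A B := ⟨by linarith, by linarith [hs.2]⟩
    have hm2 : s + ε ∈ Set.Icc A B := ⟨by linarith [hs.1], by linarith⟩
    rw [key A hAm (s - ε) hm1 (by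
        rw [Set.uIcc_of_le hm1.1]; intro h; linarith [h.2]),
      key (s + ε) hm2 B hBm (by
        rw [Set.uIcc_of_le hm2.2]; intro h; linarith [h.1])]
    have e1 : (s - ε - s) / (A - s) = ε / (s - A) := by
      rw [← neg_div_neg_eq]; congr 1 <;> ring
    have e2 : (B - s) / (s + ε - s) = (B - s) / ε := by congr 1; ring
    rw [e1, e2, Real.log_div he0.ne' (by linarith), Real.log_div (by linarith) he0.ne']
    have e3 := intervalIntegral.integral_interval_sub_left (hgm A hAm B hBm)
      (hgm A hAm (s + ε) hm2)
    simp only [Function.comp]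
    rw [e3, hL]
    ring
  · have h := (Complex.continuous_conj.tendsto _).comp h2
    have e : (starRingEnd ℂ) ((((∫ r in A..B, g r) + f s * L : ℝ) : ℂ) +
          (Real.pi : ℂ) * (f s : ℂ) * Complex.I) =
        (((∫ r in A..B, g r) + f s * L : ℝ) : ℂ) - (Real.pi : ℂ) * (f s : ℂ) * Complex.I := by
      simp only [map_add, map_mul, Complex.conj_ofReal, Complex.conj_I]
      ring
    rw [e] at h
    refine h.congr fun ε => ?_
    simp only [Function.comp]
    rw [intervalIntegral.integral_of_le hAB.le, intervalIntegral.integral_of_le hAB.le,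
      ← integral_conj]
    congr 1
    ext r
    simp only [map_div₀, map_sub, map_mul, Complex.conj_ofReal, Complex.conj_I]
    congr 1
    ring
end

section
/- Let A < B be real numbers, let α ∈ (0,1), and let s ∈ (A,B). Then the principal value integral exists and (1/π) PV ∫_A^B ((r−A)/(B−r))^α / (r−s) dr = ( 1 − cos(πα) ((s−A)/(B−s))^α ) / sin(πα). -/
open Filter Topology intervalIntegral
open MeasureTheory Set

lemma cot_sum (α : ℝ) (h0 : 0 < α) (h1 : α < 1) :
    Tendsto (fun N : ℕ => ∑ n ∈ Finset.range N, (1/((n:ℝ)+1-α) - 1/((n:ℝ)+α))) atTop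
      (𝓝 (-(Real.pi * (Real.cos (Real.pi*α) / Real.sin (Real.pi*α))))) := by
  have hz : (α:ℂ) ∈ Complex.integerComplement := by
    rintro ⟨k, hk⟩
    have hk' : (k:ℝ) = α := by exact_mod_cast hk
    rw [← hk'] at h0 h1
    norm_cast at h0 h1
    omega
  have h := tendsto_logDeriv_euler_cot_sub hz
  have h2 : Tendsto (fun N : ℕ => ∑ n ∈ Finset.range N, (1/(α-((n:ℝ)+1)) + 1/(α + ((n:ℝ)+1)))) atTop
      (𝓝 (Real.pi * (Real.cos (Real.pi*α) / Real.sin (Real.pi*α)) - 1/α)) := by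
    rw [← Filter.tendsto_ofReal_iff]
    convert! h using 2
    · push_cast; rfl
    · push_cast [Complex.cot]; rfl
  have h3 : Tendsto (fun N : ℕ => 1/((N:ℝ)+α)) atTop (𝓝 0) := by
    simp_rw [one_div]
    exact (tendsto_natCast_atTop_atTop.atTop_add tendsto_const_nhds).inv_tendsto_atTop
  have h4 := (h3.sub (h2.add_const (1/α)))
  have e : -(Real.pi * (Real.cos (Real.pi*α) / Real.sin (Real.pi*α))) = 0 - (Real.pi * (Real.cos (Real.pi*α) / Real.sin (Real.pi*α)) - 1/α + 1/α) := by ring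
  rw [e]
  refine h4.congr fun N => ?_
  induction N with
  | zero => simp
  | succ k ih =>
    rw [Finset.sum_range_succ, Finset.sum_range_succ, ← ih]
    have e1 : α - ((k:ℝ)+1) = -((k:ℝ)+1-α) := by ring
    have e2 : α + ((k:ℝ)+1) = ((k+1:ℕ):ℝ)+α := by push_cast; ring
    rw [e1, e2, one_div_neg_eq_neg_one_div]
    ring

lemma term_int (a : ℝ) (ha : 0 < a) : IntegrableOn (fun x : ℝ => x^(a-1)) (Ioo 0 1) ∧ ∫ x in Ioo (0:ℝ) 1, x^(a-1) = 1/a := by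
  have h := intervalIntegral.intervalIntegrable_rpow' (a := 0) (b := 1) (r := a-1) (by linarith)
  rw [intervalIntegrable_iff_integrableOn_Ioo_of_le zero_le_one] at h
  refine ⟨h, ?_⟩
  rw [← integral_Ioc_eq_integral_Ioo, ← intervalIntegral.integral_of_le zero_le_one, integral_rpow (by left; linarith)]
  simp [Real.zero_rpow ha.ne']

lemma K_int (α : ℝ) (h0 : 0 < α) (h1 : α < 1) :
    IntegrableOn (fun x : ℝ => (x^(-α) - x^(α-1))/(1-x)) (Ioo 0 1) ∧
    ∫ x in Ioo (0:ℝ) 1, (x^(-α) - x^(α-1))/(1-x) = -(Real.pi * (Real.cos (Real.pi*α) / Real.sin (Real.pi*α))) := by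
  set F : ℕ → ℝ → ℝ := fun n x => x^(((n:ℝ)+1-α)-1) - x^(((n:ℝ)+α)-1) with hF
  have p1 : ∀ n : ℕ, 0 < (n:ℝ)+1-α := fun n => by have := n.cast_nonneg (α := ℝ); linarith
  have p2 : ∀ n : ℕ, 0 < (n:ℝ)+α := fun n => by positivity
  have hFi : ∀ n, IntegrableOn (F n) (Ioo 0 1) := fun n => (term_int _ (p1 n)).1.sub (term_int _ (p2 n)).1
  have hFv : ∀ n, ∫ x in Ioo (0:ℝ) 1, F n x = 1/((n:ℝ)+1-α) - 1/((n:ℝ)+α) := fun n => by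
    rw [← (term_int _ (p1 n)).2, ← (term_int _ (p2 n)).2]
    exact integral_sub (term_int _ (p1 n)).1 (term_int _ (p2 n)).1
  have hFn : ∀ n, ∫ x in Ioo (0:ℝ) 1, ‖F n x‖ = |1/((n:ℝ)+1-α) - 1/((n:ℝ)+α)| := fun n => by
    rw [← hFv]
    rcases le_total α (1/2) with h | h
    · have hs : ∀ x ∈ Ioo (0:ℝ) 1, F n x ≤ 0 := fun x hx => by
        simp only [hF, sub_nonpos]
        exact Real.rpow_le_rpow_of_exponent_ge hx.1 hx.2.le (by linarith)
      rw [abs_of_nonpos (setIntegral_nonpos measurableSet_Ioo hs), ← MeasureTheory.integral_neg]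
      exact setIntegral_congr_fun measurableSet_Ioo fun x hx => by
        simp only [Real.norm_eq_abs]; exact abs_of_nonpos (hs x hx)
    · have hs : ∀ x ∈ Ioo (0:ℝ) 1, 0 ≤ F n x := fun x hx => by
        simp only [hF, sub_nonneg]
        exact Real.rpow_le_rpow_of_exponent_ge hx.1 hx.2.le (by linarith)
      rw [abs_of_nonneg (setIntegral_nonneg measurableSet_Ioo hs)]
      exact setIntegral_congr_fun measurableSet_Ioo fun x hx => by
        simp only [Real.norm_eq_abs]; exact abs_of_nonneg (hs x hx)
  have hsum : Summable fun n => ∫ x in Ioo (0:ℝ) 1, ‖F n x‖ := by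
    simp_rw [hFn]
    have hb : Summable fun n : ℕ => (1/(α*(1-α))) * (1/((n:ℝ)+1)^2) := by
      apply Summable.mul_left
      have := (summable_nat_add_iff 1).2 (Real.summable_one_div_nat_pow (p := 2) |>.2 (by norm_num))
      simpa using this
    refine hb.of_nonneg_of_le (fun n => abs_nonneg _) fun n => ?_
    have hn := n.cast_nonneg (α := ℝ)
    have q := p1 n
    have q2 := p2 n
    have e : 1/((n:ℝ)+1-α) - 1/((n:ℝ)+α) = (2*α-1)/(((n:ℝ)+1-α)*((n:ℝ)+α)) := by field_simp; ring
    have b : 0 < 1 - α := by linarith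
    rw [e, abs_div, abs_of_pos (mul_pos q q2), show 1/(α*(1-α)) * (1/((n:ℝ)+1)^2) = 1/(α*(1-α)*((n:ℝ)+1)^2) by rw [one_div_mul_one_div]]
    apply div_le_div₀ zero_le_one (abs_le.2 ⟨by linarith, by linarith⟩) (by positivity)
    have : (1-α)*((n:ℝ)+1) ≤ (n:ℝ)+1-α := by nlinarith
    have : α*((n:ℝ)+1) ≤ (n:ℝ)+α := by nlinarith
    calc _ = ((1-α)*((n:ℝ)+1)) * (α*((n:ℝ)+1)) := by ring
      _ ≤ _ := by gcongr
  have H := hasSum_integral_of_summable_integral_norm hFi hsum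
  simp_rw [hFv] at H
  have hval := tendsto_nhds_unique H.tendsto_sum_nat (cot_sum α h0 h1)
  have hval2 : ∫ x in Ioo (0:ℝ) 1, (x^(-α) - x^(α-1))/(1-x) = -(Real.pi * (Real.cos (Real.pi*α) / Real.sin (Real.pi*α))) := by
    rw [← hval]
    refine setIntegral_congr_fun measurableSet_Ioo fun x hx => ?_
    have := (hasSum_geometric_of_lt_one hx.1.le hx.2).mul_left (x^(-α) - x^(α-1))
    rw [← div_eq_mul_inv] at this
    rw [← this.tsum_eq]
    congr 1; ext n
    simp only [hF]
    rw [show (n:ℝ)+1-α-1 = -α + n by ring, show (n:ℝ)+α-1 = (α-1)+n by ring, Real.rpow_add hx.1, Real.rpow_add hx.1, Real.rpow_natCast]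
    ring
  refine ⟨?_, hval2⟩
  by_cases ha : α = 1/2
  · subst ha; norm_num
  · apply Integrable.of_integral_ne_zero
    rw [hval2]
    have hc : Real.cos (Real.pi*α) ≠ 0 := fun hc => ha (by
      have := Real.injOn_cos (x₁ := Real.pi*α) (x₂ := Real.pi/2) ⟨by positivity, by nlinarith [Real.pi_pos]⟩ ⟨by positivity, by linarith [Real.pi_pos]⟩ (by rw [hc, Real.cos_pi_div_two])
      have hp := Real.pi_pos
      field_simp at this ⊢; linarith)
    have hs : 0 < Real.sin (Real.pi*α) := Real.sin_pos_of_pos_of_lt_pi (by positivity) (by nlinarith [Real.pi_pos])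
    exact neg_ne_zero.2 (mul_ne_zero Real.pi_ne_zero (div_ne_zero hc hs.ne'))

lemma g_int (β : ℝ) (h : -1 < β) (v : ℝ) (hv : v < 1) (hv0 : 0 ≤ v) : IntegrableOn (fun x : ℝ => x^β/(1-x)) (Ioo 0 v) := by
  have h1 := intervalIntegral.intervalIntegrable_rpow' (a := 0) (b := v) h
  have h2 : IntervalIntegrable (fun x : ℝ => x^β*(1-x)⁻¹) volume 0 v := by
    apply h1.mul_continuousOn
    apply ContinuousOn.inv₀ (by fun_prop)
    intro x hx
    rw [uIcc_of_le hv0] at hx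
    have := hx.2
    linarith
  rw [intervalIntegrable_iff_integrableOn_Ioo_of_le hv0] at h2
  simpa [div_eq_mul_inv] using h2

lemma lim5 (α : ℝ) (h0 : 0 < α) (h1 : α < 1) (l : Filter ℝ) (u v : ℝ → ℝ)
    (hu : Tendsto u l (𝓝 1)) (hv : Tendsto v l (𝓝 1)) (hu1 : ∀ᶠ e in l, u e < 1) (hv1 : ∀ᶠ e in l, v e < 1)
    (hr : Tendsto (fun e => (1 - u e)/(1 - v e)) l (𝓝 1)) :
    Tendsto (fun e => (∫ x in Ioo 0 (v e), x^(-α)/(1-x)) - ∫ x in Ioo 0 (u e), x^(α-1)/(1-x)) l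
      (𝓝 (-(Real.pi * (Real.cos (Real.pi*α) / Real.sin (Real.pi*α))))) := by
  obtain ⟨Ki, Kv⟩ := K_int α h0 h1
  have t1 : Tendsto (fun e => ∫ x in (0:ℝ)..(v e), (x^(-α) - x^(α-1))/(1-x)) l
      (𝓝 (-(Real.pi * (Real.cos (Real.pi*α) / Real.sin (Real.pi*α))))) := by
    rw [← Kv, ← integral_Ioc_eq_integral_Ioo, ← intervalIntegral.integral_of_le zero_le_one]
    rw [← integrableOn_Icc_iff_integrableOn_Ioo] at Ki
    have hc := intervalIntegral.continuousOn_primitive_interval (a := 0) (b := 1) (by rwa [uIcc_of_le zero_le_one])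
    have hc1 := hc 1 (by simp)
    refine hc1.tendsto.comp (tendsto_nhdsWithin_iff.2 ⟨hv, ?_⟩)
    filter_upwards [hv1, hv.eventually (lt_mem_nhds (show (0:ℝ) < 1 by norm_num))] with e a b
    rw [uIcc_of_le zero_le_one]; exact ⟨b.le, a.le⟩
  have t2 : Tendsto (fun e => ∫ x in (u e)..(v e), x^(α-1)/(1-x)) l (𝓝 0) := by
    have hr2 := hr.inv₀ one_ne_zero
    have hb : Tendsto (fun e => 2*(|(1 - u e)/(1 - v e) - 1| + |((1 - u e)/(1 - v e))⁻¹ - 1|)) l (𝓝 0) := by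
      have := (((hr.sub_const 1).abs).add ((hr2.sub_const 1).abs)).const_mul 2
      simpa using this
    refine squeeze_zero_norm' ?_ hb
    filter_upwards [hu1, hv1, hv.eventually (lt_mem_nhds (show (1/2:ℝ) < 1 by norm_num)), hu.eventually (lt_mem_nhds (show (1/2:ℝ) < 1 by norm_num))] with e a b c d
    have pu : 0 < 1 - u e := by linarith
    have pv : 0 < 1 - v e := by linarith
    have key := intervalIntegral.norm_integral_le_of_norm_le_const (a := u e) (b := v e) (f := fun x : ℝ => x^(α-1)/(1-x)) (C := 2*((1-v e)⁻¹ + (1-u e)⁻¹)) (by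
      intro x hx
      have hx' := uIoc_subset_uIcc hx
      have hxl : 1/2 ≤ x := by
        have := hx'.1; have := lt_min d c; linarith
      have hx1 : (1-x)⁻¹ ≤ (1-v e)⁻¹ + (1-u e)⁻¹ := by
        rcases le_max_iff.1 hx'.2 with h | h
        · have : (1-x)⁻¹ ≤ (1-u e)⁻¹ := by gcongr
          have := inv_pos.2 pv; linarith
        · have : (1-x)⁻¹ ≤ (1-v e)⁻¹ := by gcongr
          have := inv_pos.2 pu; linarith
      have hx2 : x < 1 := lt_of_le_of_lt hx'.2 (max_lt a b)
      have hx3 : x^(α-1) ≤ 2 := by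
        calc x^(α-1) ≤ (1/2:ℝ)^(α-1) := Real.rpow_le_rpow_of_nonpos (by norm_num) hxl (by linarith)
          _ ≤ (1/2:ℝ)^(-1:ℝ) := Real.rpow_le_rpow_of_exponent_ge (by norm_num) (by norm_num) (by linarith)
          _ = 2 := by rw [Real.rpow_neg_one]; norm_num
      have hx4 : 0 ≤ x^(α-1) := Real.rpow_nonneg (by linarith) _
      have hx5 : 0 < 1 - x := by linarith
      rw [Real.norm_of_nonneg (by positivity), div_eq_mul_inv]
      gcongr)
    refine key.trans (le_of_eq ?_)
    have e1 : (1 - u e)/(1 - v e) - 1 = (v e - u e)/(1-v e) := by field_simp; ring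
    have e2 : ((1 - u e)/(1 - v e))⁻¹ - 1 = -((v e - u e)/(1-u e)) := by field_simp; ring
    rw [e1, e2, abs_neg, abs_div, abs_div, abs_of_pos pu, abs_of_pos pv]
    ring
  have t3 := t1.add t2
  rw [add_zero] at t3
  refine t3.congr' ?_
  filter_upwards [hu1, hv1, hv.eventually (lt_mem_nhds (show (0:ℝ) < 1 by norm_num)), hu.eventually (lt_mem_nhds (show (0:ℝ) < 1 by norm_num))] with e a b c d
  have i1 := g_int (-α) (by linarith) (v e) b c.le
  have i2 := g_int (α-1) (by linarith) (v e) b c.le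
  have i3 := g_int (α-1) (by linarith) (u e) a d.le
  rw [← integral_Ioc_eq_integral_Ioo, ← integral_Ioc_eq_integral_Ioo, ← intervalIntegral.integral_of_le c.le, ← intervalIntegral.integral_of_le d.le]
  rw [← intervalIntegrable_iff_integrableOn_Ioo_of_le c.le] at i1 i2
  rw [← intervalIntegrable_iff_integrableOn_Ioo_of_le d.le] at i3
  simp_rw [sub_div]
  rw [intervalIntegral.integral_sub i1 i2, ← intervalIntegral.integral_add_adjacent_intervals i3 (i3.symm.trans i2)]
  ring

lemma beta_int (α : ℝ) (h0 : 0 < α) (h1 : α < 1) :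
    IntegrableOn (fun x : ℝ => x^(α-1)*(1-x)^(-α)) (Ioo 0 1) ∧
    ∫ x in Ioo (0:ℝ) 1, x^(α-1)*(1-x)^(-α) = Real.pi / Real.sin (Real.pi*α) := by
  have hv : ∫ x in Ioo (0:ℝ) 1, x^(α-1)*(1-x)^(-α) = Real.pi / Real.sin (Real.pi*α) := by
    have e := ProbabilityTheory.beta_eq_betaIntegralReal α (1-α) h0 (by linarith)
    rw [ProbabilityTheory.beta, Real.Gamma_mul_Gamma_one_sub, Complex.betaIntegral, intervalIntegral.integral_of_le zero_le_one, integral_Ioc_eq_integral_Ioo] at e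
    simp only [add_sub_cancel, Real.Gamma_one, div_one] at e
    rw [e, ← Complex.ofReal_re (∫ x in Ioo (0:ℝ) 1, x^(α-1)*(1-x)^(-α)), ← integral_complex_ofReal]
    congr 1
    refine setIntegral_congr_fun measurableSet_Ioo fun x hx => ?_
    have := hx.2
    rw [Complex.ofReal_mul, Complex.ofReal_cpow hx.1.le, Complex.ofReal_cpow (by linarith)]
    push_cast
    congr 2; ring
  refine ⟨?_, hv⟩
  apply Integrable.of_integral_ne_zero
  rw [hv]
  have hs : 0 < Real.sin (Real.pi*α) := Real.sin_pos_of_pos_of_lt_pi (by positivity) (by nlinarith [Real.pi_pos])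
  exact (div_pos Real.pi_pos hs).ne'

lemma cov (φ ψ φ' q G : ℝ → ℝ) (a b c d : ℝ)
    (hd : ∀ x ∈ Ioo c d, HasDerivAt φ (φ' x) x)
    (h1 : ∀ x ∈ Ioo c d, φ x ∈ Ioo a b ∧ ψ (φ x) = x)
    (h2 : ∀ r ∈ Ioo a b, ψ r ∈ Ioo c d ∧ φ (ψ r) = r)
    (hq : ∀ x ∈ Ioo c d, |φ' x| * q (φ x) = G x)
    (hG : IntegrableOn G (Ioo c d)) :
    IntegrableOn q (Ioo a b) ∧ ∫ r in Ioo a b, q r = ∫ x in Ioo c d, G x := by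
  have him : φ '' Ioo c d = Ioo a b := by
    ext r; constructor
    · rintro ⟨x, hx, rfl⟩; exact (h1 x hx).1
    · intro hr; exact ⟨ψ r, (h2 r hr).1, (h2 r hr).2⟩
  have hinj : InjOn φ (Ioo c d) := fun x hx y hy e => by
    rw [← (h1 x hx).2, ← (h1 y hy).2, e]
  have hd' : ∀ x ∈ Ioo c d, HasDerivWithinAt φ (φ' x) (Ioo c d) x := fun x hx => (hd x hx).hasDerivWithinAt
  rw [← him, integrableOn_image_iff_integrableOn_abs_deriv_smul measurableSet_Ioo hd' hinj,
    integral_image_eq_integral_abs_deriv_smul measurableSet_Ioo hd' hinj]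
  refine ⟨hG.congr_fun (fun x hx => (hq x hx).symm) measurableSet_Ioo, setIntegral_congr_fun measurableSet_Ioo hq⟩

lemma cov_beta (A B α : ℝ) (hAB : A < B) (h0 : 0 < α) (h1 : α < 1) :
    IntegrableOn (fun r => ((r-A)/(B-r))^α/(r-A)) (Ioo A B) ∧
      ∫ r in Ioo A B, ((r-A)/(B-r))^α/(r-A) = Real.pi / Real.sin (Real.pi*α) := by
  obtain ⟨bi, bv⟩ := beta_int α h0 h1
  rw [← bv]
  have hD : 0 < B - A := by linarith
  refine cov (fun x => A + (B-A)*x) (fun r => (r-A)/(B-A)) (fun _ => B-A) _ _ A B 0 1 ?_ ?_ ?_ ?_ bi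
  · intro x hx
    simpa using ((hasDerivAt_id x).const_mul (B-A)).const_add A
  · rintro x ⟨x0, x1⟩
    refine ⟨⟨by nlinarith, by nlinarith⟩, by field_simp; ring⟩
  · rintro r ⟨r0, r1⟩
    refine ⟨⟨div_pos (by linarith) hD, by rw [div_lt_one hD]; linarith⟩, by field_simp; ring⟩
  · rintro x ⟨x0, x1⟩
    have y0 : 0 < 1 - x := by linarith
    rw [show (A + (B-A)*x - A)/(B - (A + (B-A)*x)) = x/(1-x) by
      rw [show A + (B-A)*x - A = (B-A)*x by ring, show B - (A + (B-A)*x) = (B-A)*(1-x) by ring, mul_div_mul_left _ _ hD.ne'],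
      Real.div_rpow x0.le y0.le, abs_of_pos hD, Real.rpow_sub_one x0.ne', Real.rpow_neg y0.le, add_sub_cancel_left]
    field_simp

lemma cov_left (A B α s ε : ℝ) (h0 : 0 < α) (hs : A < s) (hB : s < B) (he : 0 < ε) (he' : ε < s - A) :
    IntegrableOn (fun r => (s-A)*(((r-A)/(B-r))^α/((r-s)*(r-A)))) (Ioo A (s-ε)) ∧
      ∫ r in Ioo A (s-ε), (s-A)*(((r-A)/(B-r))^α/((r-s)*(r-A))) =
       ∫ x in Ioo 0 ((s-ε-A)*(B-s)/((B-s+ε)*(s-A))), (-((s-A)/(B-s))^α)*(x^(α-1)/(1-x)) := by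
  obtain ⟨p, hp⟩ : ∃ p, p = s - A := ⟨_, rfl⟩
  obtain ⟨m, hm⟩ : ∃ m, m = B - s := ⟨_, rfl⟩
  have p0 : 0 < p := by linarith
  have m0 : 0 < m := by linarith
  obtain rfl : A = s - p := by linarith
  obtain rfl : B = s + m := by linarith
  simp only [sub_sub_cancel, add_sub_cancel_left] at *
  have U1 : (s-ε-(s-p))*m/((m+ε)*p) < 1 := by
    rw [div_lt_one (by positivity)]; nlinarith
  have U0 : 0 ≤ (s-ε-(s-p))*m/((m+ε)*p) := by
    have : 0 < s-ε-(s-p) := by linarith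
    positivity
  refine cov (fun x => s + p*m*(x-1)/(m+p*x)) (fun r => (r-(s-p))*m/((s+m-r)*p)) (fun x => (p+m)*p*m/(m+p*x)^2) _ _ _ _ _ _ ?_ ?_ ?_ ?_ ((g_int (α-1) (by linarith) _ U1 U0).const_mul _)
  · rintro x ⟨x0, x1⟩
    have hd : 0 < m+p*x := by positivity
    have n1 : HasDerivAt (fun x => p*m*(x-1)) (p*m) x := by
      simpa using ((hasDerivAt_id x).sub_const 1).const_mul (p*m)
    have n2 : HasDerivAt (fun x => m+p*x) p x := by
      simpa using ((hasDerivAt_id x).const_mul p).const_add m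
    convert! (n1.div n2 hd.ne').const_add s using 1
    field_simp; ring
  · rintro x ⟨x0, x1⟩
    have hd : 0 < m+p*x := by positivity
    rw [lt_div_iff₀ (by positivity)] at x1
    refine ⟨⟨?_, ?_⟩, ?_⟩
    · have : s + p*m*(x-1)/(m+p*x) - (s-p) = p*(p+m)*x/(m+p*x) := by field_simp; ring
      have : 0 < p*(p+m)*x/(m+p*x) := by positivity
      linarith
    · have : p*m*(x-1)/(m+p*x) < -ε := by
        rw [div_lt_iff₀ hd]; nlinarith
      linarith
    · have e1: s + p*m*(x-1)/(m+p*x) - (s-p) = p*(p+m)*x/(m+p*x) := by field_simp; ring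
      have e2: s + m - (s + p*m*(x-1)/(m+p*x)) = m*(p+m)/(m+p*x) := by field_simp; ring
      simp only [e1, e2]; field_simp
  · rintro r ⟨r0, r1⟩
    have y0 : 0 < r-(s-p) := by linarith
    have y1 : 0 < s+m-r := by linarith
    refine ⟨⟨by positivity, ?_⟩, ?_⟩
    · rw [div_lt_div_iff₀ (by positivity) (by positivity)]
      have hmp : 0 < m*p := by positivity
      have : (r-(s-p))*(m+ε) < (s-ε-(s-p))*(s+m-r) := by nlinarith
      nlinarith
    · have e1 : m + p*((r-(s-p))*m/((s+m-r)*p)) = m*(p+m)/(s+m-r) := by field_simp; ring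
      have e2 : (r-(s-p))*m/((s+m-r)*p) - 1 = (r-s)*(m+p)/((s+m-r)*p) := by field_simp; ring
      simp only [e1, e2]; field_simp; ring
  · rintro x ⟨x0, x1⟩
    have hd : 0 < m+p*x := by positivity
    have hx : 0 < 1 - x := by linarith
    have e1: s + p*m*(x-1)/(m+p*x) - (s-p) = p*(p+m)*x/(m+p*x) := by field_simp; ring
    have e2: s + m - (s + p*m*(x-1)/(m+p*x)) = m*(p+m)/(m+p*x) := by field_simp; ring
    have e4 : p*(p+m)*x/(m+p*x)/(m*(p+m)/(m+p*x)) = p/m*x := by field_simp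
    have e5 : s + p*m*(x-1)/(m+p*x) - s = -(p*m*(1-x)/(m+p*x)) := by field_simp; ring
    simp only [e1, e2, e4, e5]
    rw [Real.mul_rpow (by positivity) x0.le, Real.rpow_sub_one x0.ne', abs_of_pos (by positivity)]
    generalize (p/m)^α = T
    generalize x^α = X
    field_simp

lemma cov_right (A B α s ε : ℝ) (h1 : α < 1) (hs : A < s) (hB : s < B) (he : 0 < ε) (he' : ε < B - s) :
    IntegrableOn (fun r => (s-A)*(((r-A)/(B-r))^α/((r-s)*(r-A)))) (Ioo (s+ε) B) ∧
      ∫ r in Ioo (s+ε) B, (s-A)*(((r-A)/(B-r))^α/((r-s)*(r-A))) =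
       ∫ x in Ioo 0 ((B-s-ε)*(s-A)/((s-A+ε)*(B-s))), (((s-A)/(B-s))^α)*(x^(-α)/(1-x)) := by
  obtain ⟨p, hp⟩ : ∃ p, p = s - A := ⟨_, rfl⟩
  obtain ⟨m, hm⟩ : ∃ m, m = B - s := ⟨_, rfl⟩
  have p0 : 0 < p := by linarith
  have m0 : 0 < m := by linarith
  obtain rfl : A = s - p := by linarith
  obtain rfl : B = s + m := by linarith
  simp only [sub_sub_cancel, add_sub_cancel_left] at *
  have U1 : (m-ε)*p/((p+ε)*m) < 1 := by
    rw [div_lt_one (by positivity)]; nlinarith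
  have U0 : 0 ≤ (m-ε)*p/((p+ε)*m) := by
    have : 0 < m-ε := by linarith
    positivity
  refine cov (fun x => s + p*m*(1-x)/(p+m*x)) (fun r => (s+m-r)*p/((r-(s-p))*m)) (fun x => -((p+m)*p*m/(p+m*x)^2)) _ _ _ _ _ _ ?_ ?_ ?_ ?_ ((g_int (-α) (by linarith) _ U1 U0).const_mul _)
  · rintro x ⟨x0, x1⟩
    have hd : 0 < p+m*x := by positivity
    have n1 : HasDerivAt (fun x => p*m*(1-x)) (-(p*m)) x := by
      simpa using ((hasDerivAt_id x).const_sub 1).const_mul (p*m)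
    have n2 : HasDerivAt (fun x => p+m*x) m x := by
      simpa using ((hasDerivAt_id x).const_mul m).const_add p
    convert! (n1.div n2 hd.ne').const_add s using 1
    field_simp; ring
  · rintro x ⟨x0, x1⟩
    have hd : 0 < p+m*x := by positivity
    rw [lt_div_iff₀ (by positivity)] at x1
    have e1: s + p*m*(1-x)/(p+m*x) - (s-p) = p*(p+m)/(p+m*x) := by field_simp; ring
    have e2: s + m - (s + p*m*(1-x)/(p+m*x)) = m*(p+m)*x/(p+m*x) := by field_simp; ring
    refine ⟨⟨?_, ?_⟩, ?_⟩
    · have : ε < p*m*(1-x)/(p+m*x) := by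
        rw [lt_div_iff₀ hd]; nlinarith
      linarith
    · have : 0 < m*(p+m)*x/(p+m*x) := by positivity
      linarith
    · simp only [e1, e2]; field_simp
  · rintro r ⟨r0, r1⟩
    have y0 : 0 < r-(s-p) := by linarith
    have y1 : 0 < s+m-r := by linarith
    refine ⟨⟨by positivity, ?_⟩, ?_⟩
    · rw [div_lt_div_iff₀ (by positivity) (by positivity)]
      have hmp : 0 < m*p := by positivity
      have : (s+m-r)*(p+ε) < (m-ε)*(r-(s-p)) := by nlinarith
      nlinarith
    · have e1 : p + m*((s+m-r)*p/((r-(s-p))*m)) = p*(p+m)/(r-(s-p)) := by field_simp; ring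
      have e2 : 1 - (s+m-r)*p/((r-(s-p))*m) = (r-s)*(m+p)/((r-(s-p))*m) := by field_simp; ring
      simp only [e1, e2]; field_simp; ring
  · rintro x ⟨x0, x1⟩
    have hd : 0 < p+m*x := by positivity
    have hx : 0 < 1 - x := by linarith
    have e1: s + p*m*(1-x)/(p+m*x) - (s-p) = p*(p+m)/(p+m*x) := by field_simp; ring
    have e2: s + m - (s + p*m*(1-x)/(p+m*x)) = m*(p+m)*x/(p+m*x) := by field_simp; ring
    have e4 : p*(p+m)/(p+m*x)/(m*(p+m)*x/(p+m*x)) = p/m*x⁻¹ := by field_simp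
    have e5 : s + p*m*(1-x)/(p+m*x) - s = (p*m*(1-x)/(p+m*x)) := by ring
    simp only [e1, e2, e4, e5]
    rw [Real.mul_rpow (by positivity) (by positivity), Real.inv_rpow x0.le, ← Real.rpow_neg x0.le, abs_neg, abs_of_pos (by positivity)]
    generalize (p/m)^α = T
    generalize x^(-α) = X
    field_simp

/-- The finite Hilbert transform of the weight `a(r) = ((r−A)/(B−r))^α`:
`(1/π) PV ∫_A^B ((r−A)/(B−r))^α/(r−s) dr = (1 − cos(πα)((s−A)/(B−s))^α)/sin(πα)`. -/
theorem hilbert_transform_of_weight (A B : ℝ) (hAB : A < B)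
    (α : ℝ) (hα : α ∈ Set.Ioo (0 : ℝ) 1) (s : ℝ) (hs : s ∈ Set.Ioo A B) :
    Tendsto
      (fun ε : ℝ =>
        (∫ r in A..(s - ε), ((r - A) / (B - r)) ^ α / (r - s)) +
          ∫ r in (s + ε)..B, ((r - A) / (B - r)) ^ α / (r - s))
      (𝓝[>] 0)
      (𝓝 (Real.pi *
        ((1 - Real.cos (Real.pi * α) * ((s - A) / (B - s)) ^ α) / Real.sin (Real.pi * α)))) := by
  obtain ⟨h0, h1⟩ := hα
  obtain ⟨hsA, hsB⟩ := hs
  have p0 : 0 < s - A := by linarith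
  have m0 : 0 < B - s := by linarith
  obtain ⟨bi, bv⟩ := cov_beta A B α hAB h0 h1
  have id0 : Tendsto (fun e : ℝ => e) (𝓝[>] 0) (𝓝 0) := tendsto_id.mono_left nhdsWithin_le_nhds
  have ev0 : ∀ᶠ e : ℝ in 𝓝[>] 0, 0 < e := self_mem_nhdsWithin
  have evp := id0.eventually (gt_mem_nhds p0)
  have evm := id0.eventually (gt_mem_nhds m0)
  -- beta part
  have tb : Tendsto (fun e : ℝ => (∫ r in A..(s-e), ((r-A)/(B-r))^α/(r-A)) + ∫ r in (s+e)..B, ((r-A)/(B-r))^α/(r-A)) (𝓝[>] 0)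
      (𝓝 (Real.pi / Real.sin (Real.pi*α))) := by
    have bi' := bi
    rw [← integrableOn_Icc_iff_integrableOn_Ioo] at bi'
    have hc := intervalIntegral.continuousOn_primitive_interval (a := A) (b := B) (by rwa [uIcc_of_le hAB.le])
    have hcs : ContinuousAt (fun x => ∫ r in A..x, ((r-A)/(B-r))^α/(r-A)) s := by
      apply hc.continuousAt
      rw [uIcc_of_le hAB.le]; exact Icc_mem_nhds hsA hsB
    have c1 : Tendsto (fun e : ℝ => s - e) (𝓝[>] 0) (𝓝 s) := by simpa using id0.const_sub s
    have c2 : Tendsto (fun e : ℝ => s + e) (𝓝[>] 0) (𝓝 s) := by simpa using id0.const_add s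
    have := ((hcs.tendsto.comp c1).sub (hcs.tendsto.comp c2)).add_const (∫ r in A..B, ((r-A)/(B-r))^α/(r-A))
    rw [sub_self, zero_add, intervalIntegral.integral_of_le hAB.le, integral_Ioc_eq_integral_Ioo, bv] at this
    refine this.congr' ?_
    filter_upwards [ev0, evm] with e a b
    have hi : IntervalIntegrable (fun r => ((r-A)/(B-r))^α/(r-A)) volume A B := by
      rwa [intervalIntegrable_iff_integrableOn_Ioo_of_le hAB.le]
    have i1 : IntervalIntegrable (fun r => ((r-A)/(B-r))^α/(r-A)) volume A (s+e) :=
      hi.mono_set (by rw [uIcc_of_le hAB.le, uIcc_of_le (by linarith)]; exact Icc_subset_Icc_right (by linarith))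
    rw [← bv, ← integral_Ioc_eq_integral_Ioo, ← intervalIntegral.integral_of_le hAB.le,
      ← intervalIntegral.integral_add_adjacent_intervals i1 (i1.symm.trans hi)]
    simp only [Function.comp]
    ring
  -- singular part
  have hu : Tendsto (fun e : ℝ => (s-e-A)*(B-s)/((B-s+e)*(s-A))) (𝓝[>] 0) (𝓝 1) := by
    have : ContinuousAt (fun e : ℝ => (s-e-A)*(B-s)/((B-s+e)*(s-A))) 0 := by
      apply ContinuousAt.div (by fun_prop) (by fun_prop)
      simp only [add_zero]; positivity
    have h := this.tendsto.mono_left (nhdsWithin_le_nhds (s := Ioi 0))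
    convert! h using 2
    simp only [add_zero, sub_zero]; field_simp
  have hv : Tendsto (fun e : ℝ => (B-s-e)*(s-A)/((s-A+e)*(B-s))) (𝓝[>] 0) (𝓝 1) := by
    have : ContinuousAt (fun e : ℝ => (B-s-e)*(s-A)/((s-A+e)*(B-s))) 0 := by
      apply ContinuousAt.div (by fun_prop) (by fun_prop)
      simp only [add_zero]; positivity
    have h := this.tendsto.mono_left (nhdsWithin_le_nhds (s := Ioi 0))
    convert! h using 2
    simp only [add_zero, sub_zero]; field_simp
  have hr : Tendsto (fun e : ℝ => (1-(s-e-A)*(B-s)/((B-s+e)*(s-A)))/(1-(B-s-e)*(s-A)/((s-A+e)*(B-s)))) (𝓝[>] 0) (𝓝 1) := by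
    have : ContinuousAt (fun e : ℝ => (s-A+e)*(B-s)/((B-s+e)*(s-A))) 0 := by
      apply ContinuousAt.div (by fun_prop) (by fun_prop)
      simp only [add_zero]; positivity
    have h := this.tendsto.mono_left (nhdsWithin_le_nhds (s := Ioi 0))
    have h' : Tendsto (fun e : ℝ => (s-A+e)*(B-s)/((B-s+e)*(s-A))) (𝓝[>] 0) (𝓝 1) := by
      convert! h using 2
      simp only [add_zero]; field_simp
    refine h'.congr' ?_
    filter_upwards [ev0] with e he
    have q1 : 0 < s-A+e := by linarith
    have q2 : 0 < B-s+e := by linarith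
    have q3 : 0 < B - A := by linarith
    have e1 : 1-(s-e-A)*(B-s)/((B-s+e)*(s-A)) = e*(B-A)/((B-s+e)*(s-A)) := by
      rw [eq_div_iff (by positivity), sub_mul, div_mul_cancel₀ _ (by positivity)]; ring
    have e2 : 1-(B-s-e)*(s-A)/((s-A+e)*(B-s)) = e*(B-A)/((s-A+e)*(B-s)) := by
      rw [eq_div_iff (by positivity), sub_mul, div_mul_cancel₀ _ (by positivity)]; ring
    rw [e1, e2]
    generalize s - A + e = a at *
    generalize B - s + e = b at *
    generalize s - A = c at *
    generalize B - s = d at *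
    generalize B - A = f at *
    field_simp
  have hu1 : ∀ᶠ e : ℝ in 𝓝[>] 0, (s-e-A)*(B-s)/((B-s+e)*(s-A)) < 1 := by
    filter_upwards [ev0] with e he
    rw [div_lt_one (by positivity)]; nlinarith
  have hv1 : ∀ᶠ e : ℝ in 𝓝[>] 0, (B-s-e)*(s-A)/((s-A+e)*(B-s)) < 1 := by
    filter_upwards [ev0] with e he
    rw [div_lt_one (by positivity)]; nlinarith
  have tq := (lim5 α h0 h1 _ _ _ hu hv hu1 hv1 hr).const_mul (((s-A)/(B-s))^α)
  have T := tb.add tq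
  have ev : Real.pi * ((1 - Real.cos (Real.pi * α) * ((s - A) / (B - s)) ^ α) / Real.sin (Real.pi * α)) =
    Real.pi / Real.sin (Real.pi*α) + ((s-A)/(B-s))^α * -(Real.pi * (Real.cos (Real.pi*α) / Real.sin (Real.pi*α))) := by ring
  rw [ev]
  refine T.congr' ?_
  filter_upwards [ev0, evp, evm] with e he hep hem
  obtain ⟨li, lv⟩ := cov_left A B α s e h0 hsA hsB he hep
  obtain ⟨ri, rv⟩ := cov_right A B α s e h1 hsA hsB he hem
  have key : ∀ r, r - A ≠ 0 → r - s ≠ 0 → ((r-A)/(B-r))^α/(r-s) = ((r-A)/(B-r))^α/(r-A) + (s-A)*(((r-A)/(B-r))^α/((r-s)*(r-A))) := by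
    intro r hr1 hr2
    generalize ((r-A)/(B-r))^α = X
    field_simp; ring
  rw [intervalIntegral.integral_of_le (by linarith), intervalIntegral.integral_of_le (by linarith),
    intervalIntegral.integral_of_le (by linarith), intervalIntegral.integral_of_le (by linarith)]
  simp only [integral_Ioc_eq_integral_Ioo]
  have L : ∫ r in Ioo A (s-e), ((r-A)/(B-r))^α/(r-s) = (∫ r in Ioo A (s-e), ((r-A)/(B-r))^α/(r-A)) + ∫ r in Ioo A (s-e), (s-A)*(((r-A)/(B-r))^α/((r-s)*(r-A))) := by
    rw [← MeasureTheory.integral_add (bi.mono_set (Ioo_subset_Ioo_right (by linarith))) li]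
    refine setIntegral_congr_fun measurableSet_Ioo fun r hr => key r ?_ ?_
    · have := hr.1; exact (by linarith : 0 < r - A).ne'
    · have := hr.2; exact (by linarith : r - s < 0).ne
  have R : ∫ r in Ioo (s+e) B, ((r-A)/(B-r))^α/(r-s) = (∫ r in Ioo (s+e) B, ((r-A)/(B-r))^α/(r-A)) + ∫ r in Ioo (s+e) B, (s-A)*(((r-A)/(B-r))^α/((r-s)*(r-A))) := by
    rw [← MeasureTheory.integral_add (bi.mono_set (Ioo_subset_Ioo_left (by linarith))) ri]
    refine setIntegral_congr_fun measurableSet_Ioo fun r hr => key r ?_ ?_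
    · have := hr.1; exact (by linarith : 0 < r - A).ne'
    · have := hr.1; exact (by linarith : 0 < r - s).ne'
  rw [L, R, lv, rv, MeasureTheory.integral_const_mul, MeasureTheory.integral_const_mul]
  ring
end

section
/- Let A < B be real numbers, let α ∈ (0,1), and let s ∈ (A,B). Then the principal value integral exists and (1/π) PV ∫_A^B ((B−r)/(r−A))^α / (r−s) dr = ( cos(πα) ((B−s)/(s−A))^α − 1 ) / sin(πα). -/
open Filter Topology intervalIntegral

/-- Real Beta integral `B(1-α, α)` on `[A,B]`. -/
lemma hw_beta (A B α : ℝ) (hAB : A < B) (h0 : 0 < α) (h1 : α < 1) :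
    ∫ r in A..B, (B - r) ^ (α - 1) * (r - A) ^ (-α) = Real.pi / Real.sin (Real.pi * α) := by
  have ha : 0 < B - A := sub_pos.2 hAB
  have h := Complex.betaIntegral_scaled ((1 - α : ℝ) : ℂ) (α : ℂ) ha
  have hG := Complex.Gamma_mul_Gamma_eq_betaIntegral (s := ((1 - α : ℝ) : ℂ)) (t := (α : ℂ))
    (by simpa using h1) (by simpa using h0)
  have e1 : ((1 - α : ℝ) : ℂ) + α = 1 := by push_cast; ring
  rw [e1, Complex.Gamma_one, one_mul] at hG
  rw [e1, sub_self, Complex.cpow_zero, one_mul, ← hG, Complex.Gamma_ofReal, Complex.Gamma_ofReal,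
    ← Complex.ofReal_mul, mul_comm (Real.Gamma _), Real.Gamma_mul_Gamma_one_sub] at h
  rw [← Complex.ofReal_inj, ← h, ← intervalIntegral.integral_ofReal]
  have h2 := intervalIntegral.integral_comp_sub_right (a := A) (b := B)
    (fun x : ℝ => (x : ℂ) ^ (((1 - α : ℝ) : ℂ) - 1) * (((B - A : ℝ) : ℂ) - x) ^ ((α : ℂ) - 1)) A
  rw [sub_self] at h2
  rw [← h2]
  refine intervalIntegral.integral_congr_Ioo_of_le hAB.le fun x hx => ?_
  have hx1 : 0 ≤ x - A := by linarith [hx.1]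
  have hx2 : 0 ≤ B - x := by linarith [hx.2]
  have e2 : ((1 - α : ℝ) : ℂ) - 1 = ((-α : ℝ) : ℂ) := by push_cast; ring
  have e3 : (α : ℂ) - 1 = ((α - 1 : ℝ) : ℂ) := by push_cast; ring
  have e4 : ((B - A : ℝ) : ℂ) - ((x - A : ℝ) : ℂ) = ((B - x : ℝ) : ℂ) := by push_cast; ring
  rw [e2, e3, e4, ← Complex.ofReal_cpow hx1, ← Complex.ofReal_cpow hx2]
  push_cast; ring

lemma hw_sin_pos {α : ℝ} (h0 : 0 < α) (h1 : α < 1) : 0 < Real.sin (Real.pi * α) :=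
  Real.sin_pos_of_pos_of_lt_pi (mul_pos Real.pi_pos h0)
    (by nlinarith [Real.pi_pos])

lemma hw_beta_int (A B α : ℝ) (hAB : A < B) (h0 : 0 < α) (h1 : α < 1) :
    IntervalIntegrable (fun r => (B - r) ^ (α - 1) * (r - A) ^ (-α)) MeasureTheory.volume A B := by
  apply intervalIntegral.intervalIntegrable_of_integral_ne_zero
  rw [hw_beta A B α hAB h0 h1]
  exact (div_pos Real.pi_pos (hw_sin_pos h0 h1)).ne'

/-- Terms of the regularised series. -/
noncomputable def hwT (a : ℝ) (n : ℕ) (x : ℝ) : ℝ :=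
  x ^ ((n : ℝ) + a) / ((n : ℝ) + a) - x ^ ((n : ℝ) + 1) / ((n : ℝ) + 1)

noncomputable def hwPsi (a x : ℝ) : ℝ := ∑' n, hwT a n x

noncomputable def hwPhi (a x : ℝ) : ℝ := -Real.log (1 - x) + hwPsi a x

lemma hwT_bound {a x : ℝ} (h0 : 0 < a) (h1 : a < 1) (hx0 : 0 ≤ x) (hx1 : x ≤ 1) (n : ℕ) :
    ‖hwT a n x‖ ≤ 1 / ((n : ℝ) + a) - 1 / ((n : ℝ) + 1) := by
  have hn : (0 : ℝ) ≤ n := n.cast_nonneg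
  have hp : 0 < (n : ℝ) + a := by positivity
  have hq : 0 < (n : ℝ) + 1 := by positivity
  set p := (n : ℝ) + a
  set q := (n : ℝ) + 1
  have hpq : p ≤ q := by simp only [p, q]; linarith
  have hy0 : 0 ≤ x ^ p := Real.rpow_nonneg hx0 _
  have hle : x ^ q ≤ x ^ p := by
    rcases hx0.eq_or_lt with rfl | hx
    · rw [Real.zero_rpow hp.ne', Real.zero_rpow hq.ne']
    · exact Real.rpow_le_rpow_of_exponent_ge hx hx1 hpq
  have hB := one_add_mul_self_le_rpow_one_add (s := x ^ p - 1) (by linarith) (p := q / p)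
    ((one_le_div hp).2 hpq)
  have e : (1 + (x ^ p - 1)) ^ (q / p) = x ^ q := by
    rw [add_sub_cancel, ← Real.rpow_mul hx0, mul_div_cancel₀ _ hp.ne']
  rw [e] at hB
  have hnn : 0 ≤ hwT a n x := by
    show 0 ≤ x ^ p / p - x ^ q / q
    have : x ^ q / q ≤ x ^ p / p := div_le_div₀ hy0 hle hp hpq
    linarith
  rw [Real.norm_of_nonneg hnn]
  show x ^ p / p - x ^ q / q ≤ 1 / p - 1 / q
  have h3 : (1 + q / p * (x ^ p - 1)) / q ≤ x ^ q / q := by gcongr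
  have h4 : (1 + q / p * (x ^ p - 1)) / q = 1 / q + x ^ p / p - 1 / p := by field_simp; ring
  linarith

lemma hw_summable_bound {a : ℝ} (h0 : 0 < a) (h1 : a < 1) :
    Summable fun n : ℕ => 1 / ((n : ℝ) + a) - 1 / ((n : ℝ) + 1) := by
  rw [← summable_nat_add_iff 1]
  have h : Summable fun n : ℕ => 1 / (((n + 1 : ℕ) : ℝ)) ^ 2 :=
    (summable_nat_add_iff 1).2 (Real.summable_one_div_nat_pow.2 one_lt_two)
  refine Summable.of_nonneg_of_le (fun n => ?_) (fun n => ?_) h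
  · have hn : (0 : ℝ) ≤ n := n.cast_nonneg
    push_cast
    rw [sub_nonneg]
    apply one_div_le_one_div_of_le <;> linarith
  · have hn : (0 : ℝ) ≤ n := n.cast_nonneg
    push_cast
    rw [div_sub_div _ _ (by positivity) (by positivity)]
    apply div_le_div₀ <;> nlinarith

lemma hwPsi_cont {a : ℝ} (h0 : 0 < a) (h1 : a < 1) : ContinuousOn (hwPsi a) (Set.Icc 0 1) := by
  apply continuousOn_tsum (u := fun n : ℕ => 1 / ((n : ℝ) + a) - 1 / ((n : ℝ) + 1))
  · intro n
    have hn : (0 : ℝ) ≤ n := n.cast_nonneg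
    apply Continuous.continuousOn
    unfold hwT
    exact ((Real.continuous_rpow_const (by positivity)).div_const _).sub
      ((Real.continuous_rpow_const (by positivity)).div_const _)
  · exact hw_summable_bound h0 h1
  · intro n x hx
    exact hwT_bound h0 h1 hx.1 hx.2 n

lemma hwPsi_deriv {a x : ℝ} (h0 : 0 < a) (h1 : a < 1) (hx0 : 0 < x) (hx1 : x < 1) :
    HasDerivAt (hwPsi a) ((x ^ (a - 1) - 1) / (1 - x)) x := by
  obtain ⟨δ, hδ0, hδ⟩ := exists_between hx0
  obtain ⟨ρ, hρ, hρ1⟩ := exists_between hx1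
  have key := hasDerivAt_tsum_of_isPreconnected (𝕜 := ℝ) (g := hwT a)
    (g' := fun n y => y ^ n * (y ^ (a - 1) - 1)) (u := fun n : ℕ => ρ ^ n * (δ ^ (a - 1) + 1))
    (t := Set.Ioo δ ρ) (y₀ := x) (y := x)
    ((summable_geometric_of_lt_one (by linarith) hρ1).mul_right _) isOpen_Ioo
    isPreconnected_Ioo ?_ ?_ ⟨hδ, hρ⟩ ?_ ⟨hδ, hρ⟩
  · rw [tsum_mul_right, tsum_geometric_of_lt_one hx0.le hx1] at key
    refine key.congr_deriv ?_
    ring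
  · intro n y hy
    have hy0 : 0 < y := hδ0.trans hy.1
    have hn : (0 : ℝ) ≤ n := n.cast_nonneg
    have d1 := (Real.hasDerivAt_rpow_const (p := (n : ℝ) + a) (Or.inl hy0.ne')).div_const ((n : ℝ) + a)
    have d2 := (Real.hasDerivAt_rpow_const (p := (n : ℝ) + 1) (Or.inl hy0.ne')).div_const ((n : ℝ) + 1)
    have d3 : HasDerivAt (hwT a n) _ y := d1.sub d2
    refine d3.congr_deriv ?_
    have hp : (n : ℝ) + a ≠ 0 := by positivity
    have hq : (n : ℝ) + 1 ≠ 0 := by positivity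
    rw [mul_div_cancel_left₀ _ hp, mul_div_cancel_left₀ _ hq, add_sub_cancel_right,
      add_sub_assoc, Real.rpow_add hy0, Real.rpow_natCast]
    ring
  · intro n y hy
    have hy0 : 0 < y := hδ0.trans hy.1
    rw [norm_mul, norm_pow, Real.norm_of_nonneg hy0.le]
    have h3 : y ^ (a - 1) ≤ δ ^ (a - 1) :=
      Real.rpow_le_rpow_of_nonpos hδ0 hy.1.le (by linarith)
    have h4 : 0 < y ^ (a - 1) := Real.rpow_pos_of_pos hy0 _
    have h5 : y ≤ ρ := hy.2.le
    have h6 : ‖y ^ (a - 1) - 1‖ ≤ δ ^ (a - 1) + 1 := by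
      rw [Real.norm_eq_abs, abs_le]; constructor <;> linarith
    have h7 : y ^ n ≤ ρ ^ n := pow_le_pow_left₀ hy0.le h5 n
    exact mul_le_mul h7 h6 (norm_nonneg _) ((pow_pos hy0 n).le.trans h7)
  · exact Summable.of_norm_bounded (hw_summable_bound h0 h1)
      fun n => hwT_bound h0 h1 hx0.le hx1.le n

lemma hwPhi_deriv {a x : ℝ} (h0 : 0 < a) (h1 : a < 1) (hx0 : 0 < x) (hx1 : x < 1) :
    HasDerivAt (hwPhi a) (x ^ (a - 1) / (1 - x)) x := by
  have hne : 1 - x ≠ 0 := by linarith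
  have d1 := (((hasDerivAt_id x).const_sub 1).log hne).neg.add (hwPsi_deriv h0 h1 hx0 hx1)
  refine HasDerivAt.congr_deriv (f := hwPhi a) d1 ?_
  simp only [id]
  field_simp
  ring

lemma hwPhi_cont {a : ℝ} (h0 : 0 < a) (h1 : a < 1) : ContinuousOn (hwPhi a) (Set.Ico 0 1) := by
  apply ContinuousOn.add
  · apply ContinuousOn.neg
    apply ContinuousOn.log (by fun_prop)
    intro x hx
    have := hx.2
    linarith
  · exact (hwPsi_cont h0 h1).mono Set.Ico_subset_Icc_self

lemma hwPhi_zero {a : ℝ} (h0 : 0 < a) : hwPhi a 0 = 0 := by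
  have : ∀ n, hwT a n 0 = 0 := by
    intro n
    have hn : (0 : ℝ) ≤ n := n.cast_nonneg
    rw [hwT, Real.zero_rpow (by positivity), Real.zero_rpow (by positivity)]
    simp
  simp [hwPhi, hwPsi, this]

lemma hwPsi_one {a : ℝ} (h0 : 0 < a) (h1 : a < 1) :
    hwPsi a 1 - hwPsi (1 - a) 1 = Real.pi * (Real.cos (Real.pi * a) / Real.sin (Real.pi * a)) := by
  have hT : ∀ b n, hwT b n 1 = 1 / ((n : ℝ) + b) - 1 / ((n : ℝ) + 1) := by
    intro b n; simp [hwT]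
  have t1 : Tendsto (fun N => ∑ n ∈ Finset.range N, hwT a n 1) atTop (𝓝 (hwPsi a 1)) := by
    apply HasSum.tendsto_sum_nat
    apply Summable.hasSum
    simp only [hT]; exact hw_summable_bound h0 h1
  have t2 : Tendsto (fun N => ∑ n ∈ Finset.range N, hwT (1 - a) n 1) atTop
      (𝓝 (hwPsi (1 - a) 1)) := by
    apply HasSum.tendsto_sum_nat
    apply Summable.hasSum
    simp only [hT]; exact hw_summable_bound (by linarith) (by linarith)
  have hc : (a : ℂ) ∈ Complex.integerComplement := by
    rintro ⟨k, hk⟩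
    have hk' : (k : ℝ) = a := by exact_mod_cast hk
    have k0 : (0 : ℝ) < k := by linarith
    have k1 : (k : ℝ) < 1 := by linarith
    norm_cast at k0 k1
    omega
  have t3 := tendsto_logDeriv_euler_cot_sub hc
  have t4 : Tendsto (fun n : ℕ => ∑ j ∈ Finset.range n,
      (1 / (a - ((j : ℝ) + 1)) + 1 / (a + ((j : ℝ) + 1)))) atTop
      (𝓝 (Real.pi * (Real.cos (Real.pi * a) / Real.sin (Real.pi * a)) - 1 / a)) := by
    have := (Complex.continuous_re.tendsto _).comp t3
    have e : ((Real.pi : ℂ) * Complex.cot (Real.pi * a) - 1 / a) =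
      ((Real.pi * (Real.cos (Real.pi * a) / Real.sin (Real.pi * a)) - 1 / a : ℝ) : ℂ) := by
      rw [Complex.cot]; push_cast; rfl
    rw [e, Complex.ofReal_re] at this
    refine this.congr fun n => ?_
    simp only [Function.comp, cotTerm]
    rw [← Complex.ofReal_re (∑ j ∈ Finset.range n, _)]
    congr 1
    push_cast
    rfl
  have t5 : Tendsto (fun N : ℕ => 1 / ((N : ℝ) + a)) atTop (𝓝 0) :=
    tendsto_const_nhds.div_atTop (tendsto_atTop_add_const_right _ _ tendsto_natCast_atTop_atTop)
  have t6 := (t4.add_const (1 / a)).sub t5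
  rw [sub_add_cancel, sub_zero] at t6
  refine tendsto_nhds_unique ((t1.sub t2).congr fun N => ?_) t6
  induction N with
  | zero => simp
  | succ N ih =>
    rw [Finset.sum_range_succ, Finset.sum_range_succ, Finset.sum_range_succ, hT, hT]
    have hn : (0 : ℝ) ≤ N := N.cast_nonneg
    have e : 1 / (a - ((N : ℝ) + 1)) = - (1 / ((N : ℝ) + (1 - a))) := by
      rw [← one_div_neg_eq_neg_one_div]; congr 1; ring
    have e2 : a + ((N : ℝ) + 1) = ((N + 1 : ℕ) : ℝ) + a := by push_cast; ring
    rw [e, e2]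
    linarith

/-- Limit of the difference. -/
lemma hw_limit {a : ℝ} (h0 : 0 < a) (h1 : a < 1) {x y : ℝ → ℝ} {l : Filter ℝ}
    (hx : ∀ᶠ e in l, x e ∈ Set.Ico (0 : ℝ) 1) (hy : ∀ᶠ e in l, y e ∈ Set.Ico (0 : ℝ) 1)
    (hx1 : Tendsto x l (𝓝 1)) (hy1 : Tendsto y l (𝓝 1))
    (hxy : Tendsto (fun e => (1 - y e) / (1 - x e)) l (𝓝 1)) :
    Tendsto (fun e => hwPhi a (x e) - hwPhi (1 - a) (y e)) l
      (𝓝 (Real.pi * (Real.cos (Real.pi * a) / Real.sin (Real.pi * a)))) := by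
  have aux : ∀ {b : ℝ} {z : ℝ → ℝ}, 0 < b → b < 1 → (∀ᶠ e in l, z e ∈ Set.Ico (0 : ℝ) 1) →
      Tendsto z l (𝓝 1) → Tendsto (fun e => hwPsi b (z e)) l (𝓝 (hwPsi b 1)) := by
    intro b z hb0 hb1 hz hz1
    refine (hwPsi_cont hb0 hb1 1 (by simp)).tendsto.comp ?_
    exact tendsto_nhdsWithin_iff.2 ⟨hz1, hz.mono fun e he => Set.Ico_subset_Icc_self he⟩
  have t1 := (aux h0 h1 hx hx1).sub (aux (by linarith : 0 < 1 - a) (by linarith) hy hy1)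
  rw [hwPsi_one h0 h1] at t1
  have t2 := (hxy.log one_ne_zero)
  rw [Real.log_one] at t2
  have t3 := t2.add t1
  rw [zero_add] at t3
  refine t3.congr' ?_
  filter_upwards [hx, hy] with e he he'
  have n1 : 1 - x e ≠ 0 := by linarith [he.2]
  have n2 : 1 - y e ≠ 0 := by linarith [he'.2]
  rw [Real.log_div n2 n1, hwPhi, hwPhi]
  ring

lemma hw_right (A B α s c : ℝ) (h0 : 0 < α) (h1 : α < 1) (hA : A < s) (hc : s < c) (hB : c < B) :
    IntervalIntegrable (fun r => (B - r) ^ (α - 1) * (r - A) ^ (-α) * ((B - s) / (r - s)))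
      MeasureTheory.volume c B ∧
    ∫ r in c..B, (B - r) ^ (α - 1) * (r - A) ^ (-α) * ((B - s) / (r - s)) =
      ((B - s) / (s - A)) ^ α *
        hwPhi α ((B - c) * (s - A) / ((c - A) * (B - s))) := by
  have hT : 0 < B - s := by linarith
  have hS : 0 < s - A := by linarith
  have hBA : 0 < B - A := by linarith
  set u : ℝ → ℝ := fun r => (B - r) * (s - A) / ((r - A) * (B - s)) with hu
  have one_sub : ∀ r, A < r → 1 - u r = (r - s) * (B - A) / ((r - A) * (B - s)) := by
    intro r hr
    have : r - A ≠ 0 := by linarith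
    simp only [hu]; field_simp; ring
  have hcont : ContinuousOn (fun r => -(((B - s) / (s - A)) ^ α * hwPhi α (u r)))
      (Set.Icc c B) := by
    apply ContinuousOn.neg
    apply continuousOn_const.mul
    refine (hwPhi_cont h0 h1).comp ?_ ?_
    · apply ContinuousOn.div (by fun_prop) (by fun_prop)
      intro r hr
      have : 0 < r - A := by linarith [hr.1]
      positivity
    · intro r hr
      have h2 : 0 < r - A := by linarith [hr.1]
      have h3 : 0 ≤ B - r := by linarith [hr.2]
      have h4 : 0 < r - s := by linarith [hr.1]
      refine ⟨by positivity, ?_⟩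
      have : 0 < 1 - u r := by rw [one_sub r (by linarith)]; positivity
      linarith
  have hderiv : ∀ r ∈ Set.Ioo c B, HasDerivAt (fun r => -(((B - s) / (s - A)) ^ α * hwPhi α (u r)))
      ((B - r) ^ (α - 1) * (r - A) ^ (-α) * ((B - s) / (r - s))) r := by
    intro r hr
    have hQ : 0 < r - A := by linarith [hr.1]
    have hP : 0 < B - r := by linarith [hr.2]
    have hR : 0 < r - s := by linarith [hr.1]
    have u0 : 0 < u r := by simp only [hu]; positivity
    have u1 : u r < 1 := by
      have : 0 < 1 - u r := by rw [one_sub r (by linarith)]; positivity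
      linarith
    have du : HasDerivAt u _ r :=
      (((hasDerivAt_id r).const_sub B).mul_const (s - A)).div
        (((hasDerivAt_id r).sub_const A).mul_const (B - s)) (mul_pos hQ hT).ne'
    have dd := (((hwPhi_deriv h0 h1 u0 u1).comp r du).const_mul (((B - s) / (s - A)) ^ α)).neg
    refine dd.congr_deriv ?_
    rw [one_sub r (by linarith), Real.rpow_sub_one u0.ne', Real.rpow_sub_one hP.ne',
      Real.rpow_neg hQ.le]
    simp only [hu, id]
    rw [Real.div_rpow hT.le hS.le, Real.div_rpow (by positivity) (by positivity),
      Real.mul_rpow hP.le hS.le, Real.mul_rpow hQ.le hT.le]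
    have p1 := (Real.rpow_pos_of_pos hP α).ne'
    have p2 := (Real.rpow_pos_of_pos hQ α).ne'
    have p3 := (Real.rpow_pos_of_pos hS α).ne'
    have p4 := (Real.rpow_pos_of_pos hT α).ne'
    field_simp
    ring
  have hpos : ∀ r ∈ Set.Ioo c B, 0 ≤ (B - r) ^ (α - 1) * (r - A) ^ (-α) * ((B - s) / (r - s)) := by
    intro r hr
    have hQ : 0 < r - A := by linarith [hr.1]
    have hP : 0 < B - r := by linarith [hr.2]
    have hR : 0 < r - s := by linarith [hr.1]
    positivity
  have hint : IntervalIntegrable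
      (fun r => (B - r) ^ (α - 1) * (r - A) ^ (-α) * ((B - s) / (r - s)))
      MeasureTheory.volume c B := by
    rw [intervalIntegrable_iff_integrableOn_Ioc_of_le hB.le]
    exact integrableOn_deriv_of_nonneg hcont hderiv hpos
  refine ⟨hint, ?_⟩
  rw [integral_eq_sub_of_hasDerivAt_of_le hB.le hcont hderiv hint]
  have : u B = 0 := by simp [hu]
  simp only [this, hwPhi_zero h0]
  rw [mul_zero, neg_zero, zero_sub, neg_neg]

lemma hw_left (A B α s c : ℝ) (h0 : 0 < α) (h1 : α < 1) (hA : A < c) (hc : c < s) (hB : s < B) :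
    IntervalIntegrable (fun r => (B - r) ^ (α - 1) * (r - A) ^ (-α) * ((B - s) / (r - s)))
      MeasureTheory.volume A c ∧
    ∫ r in A..c, (B - r) ^ (α - 1) * (r - A) ^ (-α) * ((B - s) / (r - s)) =
      -(((B - s) / (s - A)) ^ α *
        hwPhi (1 - α) ((c - A) * (B - s) / ((B - c) * (s - A)))) := by
  have hT : 0 < B - s := by linarith
  have hS : 0 < s - A := by linarith
  have hBA : 0 < B - A := by linarith
  have h0' : 0 < 1 - α := by linarith
  have h1' : 1 - α < 1 := by linarith
  set u : ℝ → ℝ := fun r => (r - A) * (B - s) / ((B - r) * (s - A)) with hu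
  have one_sub : ∀ r, r < B → 1 - u r = (s - r) * (B - A) / ((B - r) * (s - A)) := by
    intro r hr
    have : B - r ≠ 0 := by linarith
    simp only [hu]; field_simp; ring
  have hcont : ContinuousOn (fun r => (((B - s) / (s - A)) ^ α * hwPhi (1 - α) (u r)))
      (Set.Icc A c) := by
    apply continuousOn_const.mul
    refine (hwPhi_cont h0' h1').comp ?_ ?_
    · apply ContinuousOn.div (by fun_prop) (by fun_prop)
      intro r hr
      have : 0 < B - r := by linarith [hr.2]
      positivity
    · intro r hr
      have h2 : 0 ≤ r - A := by linarith [hr.1]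
      have h3 : 0 < B - r := by linarith [hr.2]
      have h4 : 0 < s - r := by linarith [hr.2]
      refine ⟨by positivity, ?_⟩
      have : 0 < 1 - u r := by rw [one_sub r (by linarith)]; positivity
      linarith
  have hderiv : ∀ r ∈ Set.Ioo A c, HasDerivAt
      (fun r => (((B - s) / (s - A)) ^ α * hwPhi (1 - α) (u r)))
      (-((B - r) ^ (α - 1) * (r - A) ^ (-α) * ((B - s) / (r - s)))) r := by
    intro r hr
    have hQ : 0 < r - A := by linarith [hr.1]
    have hP : 0 < B - r := by linarith [hr.2]
    have hR : 0 < s - r := by linarith [hr.2]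
    have u0 : 0 < u r := by simp only [hu]; positivity
    have u1 : u r < 1 := by
      have : 0 < 1 - u r := by rw [one_sub r (by linarith)]; positivity
      linarith
    have du : HasDerivAt u _ r :=
      (((hasDerivAt_id r).sub_const A).mul_const (B - s)).div
        (((hasDerivAt_id r).const_sub B).mul_const (s - A)) (mul_pos hP hS).ne'
    have dd := (((hwPhi_deriv h0' h1' u0 u1).comp r du).const_mul (((B - s) / (s - A)) ^ α))
    refine dd.congr_deriv ?_
    rw [one_sub r (by linarith), show 1 - α - 1 = -α by ring, Real.rpow_neg u0.le,
      Real.rpow_sub_one hP.ne', Real.rpow_neg hQ.le, show r - s = -(s - r) by ring]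
    simp only [hu, id]
    rw [Real.div_rpow hT.le hS.le, Real.div_rpow (by positivity) (by positivity),
      Real.mul_rpow hP.le hS.le, Real.mul_rpow hQ.le hT.le]
    have p1 := (Real.rpow_pos_of_pos hP α).ne'
    have p2 := (Real.rpow_pos_of_pos hQ α).ne'
    have p3 := (Real.rpow_pos_of_pos hS α).ne'
    have p4 := (Real.rpow_pos_of_pos hT α).ne'
    field_simp
    ring
  have hpos : ∀ r ∈ Set.Ioo A c,
      0 ≤ -((B - r) ^ (α - 1) * (r - A) ^ (-α) * ((B - s) / (r - s))) := by
    intro r hr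
    have hQ : 0 < r - A := by linarith [hr.1]
    have hP : 0 < B - r := by linarith [hr.2]
    have hR : 0 < s - r := by linarith [hr.2]
    rw [show r - s = -(s - r) by ring, div_neg, mul_neg, neg_neg]
    positivity
  have hint : IntervalIntegrable
      (fun r => -((B - r) ^ (α - 1) * (r - A) ^ (-α) * ((B - s) / (r - s))))
      MeasureTheory.volume A c := by
    rw [intervalIntegrable_iff_integrableOn_Ioc_of_le hA.le]
    exact integrableOn_deriv_of_nonneg hcont hderiv hpos
  have hint2 := hint.neg
  refine ⟨by simpa [Pi.neg_def] using hint2, ?_⟩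
  have hI := integral_eq_sub_of_hasDerivAt_of_le hA.le hcont hderiv hint
  rw [intervalIntegral.integral_neg] at hI
  have : u A = 0 := by simp [hu]
  simp only [this, hwPhi_zero h0'] at hI
  simp only [mul_zero, sub_zero] at hI
  rw [← hI, neg_neg]

lemma hw_split {A B α s r : ℝ} (hA : A < r) (hB : r < B) (hs : r ≠ s) :
    ((B - r) / (r - A)) ^ α / (r - s) =
      (B - r) ^ (α - 1) * (r - A) ^ (-α) * ((B - s) / (r - s)) -
        (B - r) ^ (α - 1) * (r - A) ^ (-α) := by
  have hQ : 0 < r - A := by linarith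
  have hP : 0 < B - r := by linarith
  have hR : r - s ≠ 0 := sub_ne_zero.2 hs
  rw [Real.div_rpow hP.le hQ.le, Real.rpow_sub_one hP.ne', Real.rpow_neg hQ.le]
  have p2 := (Real.rpow_pos_of_pos hQ α).ne'
  field_simp
  ring

/-- The finite Hilbert transform of the weight `a(r)^{-1} = ((B−r)/(r−A))^α`:
`(1/π) PV ∫_A^B ((B−r)/(r−A))^α/(r−s) dr = (cos(πα)((B−s)/(s−A))^α − 1)/sin(πα)`. -/
theorem hilbert_transform_of_inverse_weight (A B : ℝ) (hAB : A < B)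
    (α : ℝ) (hα : α ∈ Set.Ioo (0 : ℝ) 1) (s : ℝ) (hs : s ∈ Set.Ioo A B) :
    Tendsto
      (fun ε : ℝ =>
        (∫ r in A..(s - ε), ((B - r) / (r - A)) ^ α / (r - s)) +
          ∫ r in (s + ε)..B, ((B - r) / (r - A)) ^ α / (r - s))
      (𝓝[>] 0)
      (𝓝 (Real.pi *
        ((Real.cos (Real.pi * α) * ((B - s) / (s - A)) ^ α - 1) / Real.sin (Real.pi * α)))) := by
  obtain ⟨h0, h1⟩ := hα
  obtain ⟨hsA, hsB⟩ := hs
  have hT : 0 < B - s := by linarith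
  have hS : 0 < s - A := by linarith
  have hBA : 0 < B - A := by linarith
  set g : ℝ → ℝ := fun r => (B - r) ^ (α - 1) * (r - A) ^ (-α) with hg
  have gint : IntervalIntegrable g MeasureTheory.volume A B := hw_beta_int A B α hAB h0 h1
  have gval : ∫ r in A..B, g r = Real.pi / Real.sin (Real.pi * α) := hw_beta A B α hAB h0 h1
  have hev : ∀ᶠ ε : ℝ in 𝓝[>] 0, 0 < ε ∧ ε < s - A ∧ ε < B - s := by
    have e1 : ∀ᶠ ε : ℝ in 𝓝[>] 0, ε < s - A := nhdsWithin_le_nhds (Iio_mem_nhds hS)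
    have e2 : ∀ᶠ ε : ℝ in 𝓝[>] 0, ε < B - s := nhdsWithin_le_nhds (Iio_mem_nhds hT)
    filter_upwards [self_mem_nhdsWithin, e1, e2] with ε h h' h''
    exact ⟨h, h', h''⟩
  have gsub : ∀ {c d : ℝ}, A ≤ c → c ≤ d → d ≤ B →
      IntervalIntegrable g MeasureTheory.volume c d := by
    intro c d hc hcd hd
    apply gint.mono_set
    rw [Set.uIcc_of_le hcd, Set.uIcc_of_le hAB.le]
    exact Set.Icc_subset_Icc hc hd
  have tg : Tendsto (fun ε : ℝ => (∫ r in A..(s - ε), g r) + ∫ r in (s + ε)..B, g r) (𝓝[>] 0)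
      (𝓝 (Real.pi / Real.sin (Real.pi * α))) := by
    have hcont : ContinuousOn (fun x => ∫ r in A..x, g r) (Set.uIcc A B) :=
      intervalIntegral.continuousOn_primitive_interval (by
        rw [Set.uIcc_of_le hAB.le]
        exact (intervalIntegrable_iff_integrableOn_Icc_of_le hAB.le).1 gint)
    have hca : ContinuousAt (fun x => ∫ r in A..x, g r) s := by
      apply hcont.continuousAt
      rw [Set.uIcc_of_le hAB.le]
      exact Icc_mem_nhds hsA hsB
    have q1 : Tendsto (fun ε : ℝ => s - ε) (𝓝[>] 0) (𝓝 s) := by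
      have : Tendsto (fun ε : ℝ => s - ε) (𝓝 0) (𝓝 (s - 0)) := Continuous.tendsto (by fun_prop) 0
      rw [sub_zero] at this
      exact this.mono_left nhdsWithin_le_nhds
    have q2 : Tendsto (fun ε : ℝ => s + ε) (𝓝[>] 0) (𝓝 s) := by
      have : Tendsto (fun ε : ℝ => s + ε) (𝓝 0) (𝓝 (s + 0)) := Continuous.tendsto (by fun_prop) 0
      rw [add_zero] at this
      exact this.mono_left nhdsWithin_le_nhds
    have t := (hca.tendsto.comp q1).add ((hca.tendsto.comp q2).const_sub (∫ r in A..B, g r))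
    rw [gval, add_sub_cancel] at t
    refine t.congr' ?_
    filter_upwards [hev] with ε he
    obtain ⟨e0, eA, eB⟩ := he
    simp only [Function.comp]
    rw [← gval, ← intervalIntegral.integral_add_adjacent_intervals
      (gsub le_rfl (by linarith : A ≤ s + ε) (by linarith))
      (gsub (by linarith) (by linarith : s + ε ≤ B) le_rfl)]
    ring
  have tp : Tendsto (fun ε : ℝ =>
      hwPhi α ((B - (s + ε)) * (s - A) / (((s + ε) - A) * (B - s))) -
      hwPhi (1 - α) (((s - ε) - A) * (B - s) / ((B - (s - ε)) * (s - A)))) (𝓝[>] 0)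
      (𝓝 (Real.pi * (Real.cos (Real.pi * α) / Real.sin (Real.pi * α)))) := by
    have hne : (B - s) ≠ 0 := hT.ne'
    have hne' : (s - A) ≠ 0 := hS.ne'
    have x1 : ∀ ε : ℝ, 0 < ε → 1 - (B - (s + ε)) * (s - A) / (((s + ε) - A) * (B - s)) =
        ε * (B - A) / (((s + ε) - A) * (B - s)) := by
      intro ε he
      have : s + ε - A ≠ 0 := by linarith
      field_simp; ring
    have y1 : ∀ ε : ℝ, 0 < ε → 1 - ((s - ε) - A) * (B - s) / ((B - (s - ε)) * (s - A)) =
        ε * (B - A) / ((B - (s - ε)) * (s - A)) := by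
      intro ε he
      have : B - (s - ε) ≠ 0 := by linarith
      field_simp; ring
    apply hw_limit h0 h1
    · filter_upwards [hev] with ε he
      obtain ⟨e0, eA, eB⟩ := he
      have a1 : 0 < B - (s + ε) := by linarith
      have a2 : 0 < s + ε - A := by linarith
      refine ⟨by positivity, ?_⟩
      have := x1 ε e0
      have : 0 < ε * (B - A) / (((s + ε) - A) * (B - s)) := by positivity
      linarith
    · filter_upwards [hev] with ε he
      obtain ⟨e0, eA, eB⟩ := he
      have a1 : 0 < B - (s - ε) := by linarith
      have a2 : 0 < s - ε - A := by linarith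
      refine ⟨by positivity, ?_⟩
      have := y1 ε e0
      have : 0 < ε * (B - A) / ((B - (s - ε)) * (s - A)) := by positivity
      linarith
    · have : ContinuousAt (fun ε : ℝ => (B - (s + ε)) * (s - A) / (((s + ε) - A) * (B - s))) 0 := by
        apply ContinuousAt.div (by fun_prop) (by fun_prop)
        simpa using ⟨hne', hne⟩
      have t := this.tendsto.mono_left (nhdsWithin_le_nhds (s := Set.Ioi (0 : ℝ)))
      convert t using 2
      simp only [add_zero]
      field_simp
    · have : ContinuousAt (fun ε : ℝ => ((s - ε) - A) * (B - s) / ((B - (s - ε)) * (s - A))) 0 := by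
        apply ContinuousAt.div (by fun_prop) (by fun_prop)
        simpa using ⟨hne, hne'⟩
      have t := this.tendsto.mono_left (nhdsWithin_le_nhds (s := Set.Ioi (0 : ℝ)))
      convert t using 2
      simp only [sub_zero]
      field_simp
    · have : ContinuousAt (fun ε : ℝ => ((s + ε) - A) * (B - s) / ((B - (s - ε)) * (s - A))) 0 := by
        apply ContinuousAt.div (by fun_prop) (by fun_prop)
        simpa using ⟨hne, hne'⟩
      have t := this.tendsto.mono_left (nhdsWithin_le_nhds (s := Set.Ioi (0 : ℝ)))
      have e : ((s + 0) - A) * (B - s) / ((B - (s - 0)) * (s - A)) = 1 := by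
        simp only [sub_zero, add_zero]
        field_simp
      rw [e] at t
      refine t.congr' ?_
      filter_upwards [hev] with ε he
      obtain ⟨e0, eA, eB⟩ := he
      have a1 : 0 < B - (s - ε) := by linarith
      have a2 : 0 < s + ε - A := by linarith
      rw [x1 ε e0, y1 ε e0]
      field_simp
  have tt := (tp.const_mul (((B - s) / (s - A)) ^ α)).sub tg
  have hsin := (hw_sin_pos h0 h1).ne'
  have elim : ((B - s) / (s - A)) ^ α * (Real.pi * (Real.cos (Real.pi * α) / Real.sin (Real.pi * α)))
      - Real.pi / Real.sin (Real.pi * α) = Real.pi *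
        ((Real.cos (Real.pi * α) * ((B - s) / (s - A)) ^ α - 1) / Real.sin (Real.pi * α)) := by
    ring
  rw [elim] at tt
  refine tt.congr' ?_
  filter_upwards [hev] with ε he
  obtain ⟨e0, eA, eB⟩ := he
  obtain ⟨l1, l2⟩ := hw_left A B α s (s - ε) h0 h1 (by linarith) (by linarith) hsB
  obtain ⟨r1, r2⟩ := hw_right A B α s (s + ε) h0 h1 hsA (by linarith) (by linarith)
  have c1 : ∫ r in A..(s - ε), ((B - r) / (r - A)) ^ α / (r - s) =
      ∫ r in A..(s - ε), (g r * ((B - s) / (r - s)) - g r) :=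
    intervalIntegral.integral_congr_Ioo_of_le (by linarith) fun r hr =>
      hw_split hr.1 (by linarith [hr.2]) (by linarith [hr.2] : r < s).ne
  have c2 : ∫ r in (s + ε)..B, ((B - r) / (r - A)) ^ α / (r - s) =
      ∫ r in (s + ε)..B, (g r * ((B - s) / (r - s)) - g r) :=
    intervalIntegral.integral_congr_Ioo_of_le (by linarith) fun r hr =>
      hw_split (by linarith [hr.1]) hr.2 (by linarith [hr.1] : s < r).ne'
  rw [c1, c2, intervalIntegral.integral_sub l1 (gsub le_rfl (by linarith) (by linarith)),
    intervalIntegral.integral_sub r1 (gsub (by linarith) (by linarith) le_rfl), l2, r2]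
  ring
end

section
/- Let A < B be real numbers and let α : [A,B] → ℝ be Hölder continuous with exponent γ ∈ (0,1]. Define Φ(z) = exp( ∫_A^B α(r)/(z−r) dr ) for z ∈ ℂ \ [A,B]. Then for every s ∈ (A,B), lim_{ε→0⁺} Φ(s + iε) = exp( −π H[α](s) − iπ α(s) ) and lim_{ε→0⁺} Φ(s − iε) = exp( −π H[α](s) + iπ α(s) ); in particular the boundary values satisfy Φ⁺(s) = e^{−2πi α(s)} Φ⁻(s). -/
open Filter Topology intervalIntegral

lemma aux_abs_rpow (A B s γ : ℝ) (hs : s ∈ Set.Ioo A B) (hγ : 0 < γ) :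
    IntervalIntegrable (fun r => |r - s| ^ (γ - 1)) MeasureTheory.volume A B := by
  obtain ⟨h1, h2⟩ := hs
  apply IntervalIntegrable.trans (b := s)
  · have := (intervalIntegrable_rpow' (a := s - A) (b := 0) (r := γ - 1) (by linarith)).comp_sub_left s
    simp only [sub_sub_cancel, sub_zero] at this
    refine this.congr ?_
    intro x hx
    rw [Set.uIoc_of_le h1.le] at hx
    have : x - s ≤ 0 := by linarith [hx.2]
    simp only [abs_of_nonpos this, neg_sub]
  · have := (intervalIntegrable_rpow' (a := 0) (b := B - s) (r := γ - 1) (by linarith)).comp_sub_right s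
    simp only [zero_add, sub_add_cancel] at this
    refine this.congr ?_
    intro x hx
    rw [Set.uIoc_of_le h2.le] at hx
    have : 0 ≤ x - s := by linarith [hx.1]
    simp only [abs_of_nonneg this]

lemma aux_holder_cont (A B : ℝ) (α : ℝ → ℝ)
    (γ : ℝ) (hγ : 0 < γ) (C : ℝ)
    (hα : ∀ r ∈ Set.Icc A B, ∀ r' ∈ Set.Icc A B, |α r - α r'| ≤ C * |r - r'| ^ γ) :
    ContinuousOn α (Set.Icc A B) := by
  intro x hx
  rw [ContinuousWithinAt, tendsto_iff_dist_tendsto_zero]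
  have h0 : Tendsto (fun r : ℝ => C * |r - x| ^ γ) (𝓝[Set.Icc A B] x) (𝓝 0) := by
    have : ContinuousAt (fun r : ℝ => C * |r - x| ^ γ) x := by
      refine ContinuousAt.mul continuousAt_const ?_
      refine ContinuousAt.rpow_const (by fun_prop) (Or.inr hγ.le)
    have h := this.tendsto
    simp only [sub_self, abs_zero, Real.zero_rpow hγ.ne', mul_zero] at h
    exact h.mono_left nhdsWithin_le_nhds
  refine squeeze_zero' (Eventually.of_forall fun _ => dist_nonneg) ?_ h0
  filter_upwards [self_mem_nhdsWithin] with r hr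
  rw [Real.dist_eq]
  exact hα r hr x hx

lemma aux_bound (A B : ℝ) (α : ℝ → ℝ) (γ : ℝ) (C : ℝ)
    (hα : ∀ r ∈ Set.Icc A B, ∀ r' ∈ Set.Icc A B, |α r - α r'| ≤ C * |r - r'| ^ γ)
    (s : ℝ) (hs : s ∈ Set.Ioo A B) (r : ℝ) (hr : r ∈ Set.Icc A B) (hne : r ≠ s) :
    |α r - α s| / |r - s| ≤ C * |r - s| ^ (γ - 1) := by
  have hp : 0 < |r - s| := abs_pos.mpr (sub_ne_zero.mpr hne)
  rw [Real.rpow_sub_one hp.ne', ← mul_div_assoc]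
  gcongr
  exact hα r hr s ⟨hs.1.le, hs.2.le⟩

lemma aux_g_int (A B : ℝ) (α : ℝ → ℝ)
    (γ : ℝ) (hγ : 0 < γ) (C : ℝ)
    (hα : ∀ r ∈ Set.Icc A B, ∀ r' ∈ Set.Icc A B, |α r - α r'| ≤ C * |r - r'| ^ γ)
    (s : ℝ) (hs : s ∈ Set.Ioo A B) :
    IntervalIntegrable (fun r => (α r - α s) / (r - s)) MeasureTheory.volume A B := by
  have hAB : A ≤ B := (hs.1.trans hs.2).le
  refine ((aux_abs_rpow A B s γ hs hγ).const_mul C).mono_fun ?_ ?_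
  · rw [Set.uIoc_of_le hAB]
    have hc : ContinuousOn (fun r => α r - α s) (Set.Ioc A B) :=
      ((aux_holder_cont A B α γ hγ C hα).mono Set.Ioc_subset_Icc_self).sub continuousOn_const
    have := (hc.aestronglyMeasurable (μ := MeasureTheory.volume) measurableSet_Ioc)
    have h2 : Measurable (fun r : ℝ => (r - s)⁻¹) := by fun_prop
    simp only [div_eq_mul_inv]
    exact this.mul h2.aestronglyMeasurable
  · rw [Set.uIoc_of_le hAB]
    filter_upwards [MeasureTheory.ae_restrict_mem measurableSet_Ioc,
      MeasureTheory.ae_restrict_of_ae (MeasureTheory.Measure.ae_ne MeasureTheory.volume s)] with r hr hne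
    rw [norm_div, Real.norm_eq_abs, Real.norm_eq_abs]
    exact (aux_bound A B α γ C hα s hs r (Set.Ioc_subset_Icc_self hr) hne).trans (le_abs_self _)

lemma aux_pv (A B : ℝ) (α : ℝ → ℝ) (hc : ContinuousOn α (Set.Icc A B))
    (s : ℝ) (hs : s ∈ Set.Ioo A B)
    (hg : IntervalIntegrable (fun r => (α r - α s) / (r - s)) MeasureTheory.volume A B) :
    Tendsto (fun ε : ℝ =>
          (∫ r in A..(s - ε), α r / (r - s)) + ∫ r in (s + ε)..B, α r / (r - s))
        (𝓝[>] 0) (𝓝 ((∫ r in A..B, (α r - α s) / (r - s)) +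
          α s * (Real.log (B - s) - Real.log (s - A)))) := by
  obtain ⟨h1, h2⟩ := hs
  have hAB : A < B := h1.trans h2
  set g := fun r => (α r - α s) / (r - s) with hgdef
  have hF : ContinuousAt (fun b => ∫ x in A..b, g x) s := by
    have := continuousOn_primitive_interval' hg Set.left_mem_uIcc
    rw [Set.uIcc_of_le hAB.le] at this
    exact this.continuousAt (Icc_mem_nhds h1 h2)
  have hm : Tendsto (fun ε : ℝ => ∫ x in A..(s - ε), g x) (𝓝[>] 0) (𝓝 (∫ x in A..s, g x)) := by
    refine hF.tendsto.comp (Tendsto.mono_left ?_ nhdsWithin_le_nhds)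
    have : Continuous fun ε : ℝ => s - ε := by fun_prop
    simpa using this.tendsto 0
  have hp : Tendsto (fun ε : ℝ => ∫ x in A..(s + ε), g x) (𝓝[>] 0) (𝓝 (∫ x in A..s, g x)) := by
    refine hF.tendsto.comp (Tendsto.mono_left ?_ nhdsWithin_le_nhds)
    have : Continuous fun ε : ℝ => s + ε := by fun_prop
    simpa using this.tendsto 0
  have hT := ((hm.add_const (∫ x in A..B, g x)).sub hp).add_const
    (α s * (Real.log (B - s) - Real.log (s - A)))
  rw [add_sub_cancel_left] at hT
  refine hT.congr' ?_
  have hmem : Set.Ioo (0:ℝ) (min (s - A) (B - s)) ∈ 𝓝[>] (0:ℝ) :=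
    Ioo_mem_nhdsGT (lt_min (by linarith) (by linarith))
  filter_upwards [hmem] with ε hε
  have e0 := hε.1
  have e1 : ε < s - A := hε.2.trans_le (min_le_left _ _)
  have e2 : ε < B - s := hε.2.trans_le (min_le_right _ _)
  have key : ∀ a b : ℝ, A ≤ a → a ≤ b → b ≤ B → s ∉ Set.Icc a b →
      ∫ r in a..b, α r / (r - s) = (∫ r in a..b, g r) +
        α s * (Real.log (b - s) - Real.log (a - s)) := by
    intro a b ha hab hb hn
    have hne : ∀ x ∈ Set.uIcc a b, x - s ≠ 0 := by
      intro x hx h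
      rw [Set.uIcc_of_le hab] at hx
      exact hn (by rwa [show s = x by linarith])
    have hne0 : (0:ℝ) ∉ Set.uIcc (a - s) (b - s) := by
      rw [Set.uIcc_of_le (by linarith)]
      intro h
      exact hn ⟨by linarith [h.1], by linarith [h.2]⟩
    have ha0 : a - s ≠ 0 := hne a Set.left_mem_uIcc
    have hb0 : b - s ≠ 0 := hne b Set.right_mem_uIcc
    have hi : ∫ r in a..b, (r - s)⁻¹ = Real.log (b - s) - Real.log (a - s) := by
      rw [intervalIntegral.integral_comp_sub_right (fun x => x⁻¹) s, integral_inv hne0,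
        Real.log_div hb0 ha0]
    have hii : IntervalIntegrable (fun r => (r - s)⁻¹) MeasureTheory.volume a b := by
      apply ContinuousOn.intervalIntegrable
      exact ContinuousOn.inv₀ (by fun_prop) hne
    have hgi : IntervalIntegrable g MeasureTheory.volume a b := by
      refine hg.mono_set ?_
      rw [Set.uIcc_of_le hab, Set.uIcc_of_le hAB.le]
      exact Set.Icc_subset_Icc ha hb
    rw [← hi, ← intervalIntegral.integral_const_mul, ← intervalIntegral.integral_add hgi (hii.const_mul _)]
    apply intervalIntegral.integral_congr
    intro x hx
    have := hne x hx
    simp only [hgdef]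
    field_simp
    ring
  rw [key A (s - ε) le_rfl (by linarith) (by linarith) (fun h => by linarith [h.2]),
    key (s + ε) B (by linarith) (by linarith) le_rfl (fun h => by linarith [h.1])]
  have hsplit : ∫ r in (s+ε)..B, g r = (∫ r in A..B, g r) - ∫ r in A..(s+ε), g r := by
    rw [intervalIntegral.integral_interval_sub_left hg]
    refine hg.mono_set ?_
    rw [Set.uIcc_of_le (by linarith), Set.uIcc_of_le hAB.le]
    exact Set.Icc_subset_Icc le_rfl (by linarith)
  rw [hsplit, show s - ε - s = -ε by ring, show s + ε - s = ε by ring, Real.log_neg_eq_log,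
    show A - s = -(s - A) by ring, Real.log_neg_eq_log]
  ring

lemma aux_cx (A B : ℝ) (α : ℝ → ℝ) (hc : ContinuousOn α (Set.Icc A B))
    (s : ℝ) (hs : s ∈ Set.Ioo A B)
    (hg : IntervalIntegrable (fun r => (α r - α s) / (r - s)) MeasureTheory.volume A B)
    (σ θ : ℝ) (hσ : σ ≠ 0)
    (hlog : Tendsto (fun ε : ℝ => Complex.log ((s : ℂ) + ε * (σ * Complex.I) - B)) (𝓝[>] 0)
      (𝓝 (Real.log (B - s) + θ * Complex.I))) :
    Tendsto (fun ε : ℝ => ∫ r in A..B, (α r : ℂ) / ((s : ℂ) + ε * (σ * Complex.I) - (r : ℂ)))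
      (𝓝[>] 0) (𝓝 (-(((∫ r in A..B, (α r - α s) / (r - s)) +
          α s * (Real.log (B - s) - Real.log (s - A)) : ℝ) : ℂ) - θ * α s * Complex.I)) := by
  obtain ⟨h1, h2⟩ := hs
  have hAB : A < B := h1.trans h2
  have him : ∀ ε r : ℝ, ((s : ℂ) + ε * (σ * Complex.I) - (r : ℂ)).im = ε * σ := by
    intro ε r; simp
  have hre : ∀ ε r : ℝ, ((s : ℂ) + ε * (σ * Complex.I) - (r : ℂ)).re = s - r := by
    intro ε r; simp
  have hne : ∀ ε : ℝ, 0 < ε → ∀ r : ℝ, ((s : ℂ) + ε * (σ * Complex.I) - (r : ℂ)) ≠ 0 := by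
    intro ε hε r h
    have := him ε r
    rw [h] at this
    exact mul_ne_zero hε.ne' hσ this.symm
  have hslit : ∀ ε : ℝ, 0 < ε → ∀ r : ℝ,
      ((s : ℂ) + ε * (σ * Complex.I) - (r : ℂ)) ∈ Complex.slitPlane := by
    intro ε hε r
    right
    rw [him]
    exact mul_ne_zero hε.ne' hσ
  have hcont : ∀ ε : ℝ, 0 < ε → Continuous
      (fun r : ℝ => ((s : ℂ) + ε * (σ * Complex.I) - (r : ℂ))⁻¹) := by
    intro ε hε
    exact Continuous.inv₀ (by fun_prop) (hne ε hε)
  have hβc : ContinuousOn (fun r => ((α r : ℂ) - α s)) (Set.Icc A B) :=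
    (Complex.continuous_ofReal.comp_continuousOn hc).sub continuousOn_const
  -- dominated convergence
  have hD : Tendsto (fun ε : ℝ => ∫ r in A..B,
      ((α r : ℂ) - α s) * ((s : ℂ) + ε * (σ * Complex.I) - (r : ℂ))⁻¹) (𝓝[>] 0)
      (𝓝 (∫ r in A..B, -(((α r - α s) / (r - s) : ℝ) : ℂ))) := by
    refine intervalIntegral.tendsto_integral_filter_of_dominated_convergence
      (fun r => |(α r - α s) / (r - s)|) ?_ ?_ hg.abs ?_
    · filter_upwards [self_mem_nhdsWithin] with ε hε
      rw [Set.uIoc_of_le hAB.le]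
      exact ((hβc.mono Set.Ioc_subset_Icc_self).mul
        (hcont ε hε).continuousOn).aestronglyMeasurable measurableSet_Ioc
    · filter_upwards [self_mem_nhdsWithin] with ε hε
      filter_upwards [MeasureTheory.Measure.ae_ne MeasureTheory.volume s] with r hr _
      rw [norm_mul, norm_inv, abs_div, ← Complex.ofReal_sub, Complex.norm_real, Real.norm_eq_abs,
        ← div_eq_mul_inv]
      have : |r - s| ≤ ‖(s : ℂ) + ε * (σ * Complex.I) - (r : ℂ)‖ := by
        have := Complex.abs_re_le_norm ((s : ℂ) + ε * (σ * Complex.I) - (r : ℂ))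
        rwa [hre, abs_sub_comm] at this
      have hp : 0 < |r - s| := abs_pos.mpr (sub_ne_zero.mpr hr)
      gcongr
    · filter_upwards [MeasureTheory.Measure.ae_ne MeasureTheory.volume s] with r hr _
      have hrs : (s : ℂ) - r ≠ 0 := by
        rw [← Complex.ofReal_sub]
        exact_mod_cast sub_ne_zero.mpr hr.symm
      have hrs' : (r : ℂ) - s ≠ 0 := by
        rw [← neg_sub]; exact neg_ne_zero.mpr hrs
      have : ContinuousAt (fun ε : ℝ =>
          ((α r : ℂ) - α s) * ((s : ℂ) + ε * (σ * Complex.I) - (r : ℂ))⁻¹) 0 := by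
        refine ContinuousAt.mul continuousAt_const (ContinuousAt.inv₀ (by fun_prop) ?_)
        simpa using hrs
      have h := this.tendsto.mono_left (nhdsWithin_le_nhds (s := Set.Ioi 0))
      convert h using 2
      push_cast
      rw [zero_mul, add_zero, ← neg_sub (r : ℂ) s, inv_neg]
      ring
  have hlogA : Tendsto (fun ε : ℝ => Complex.log ((s : ℂ) + ε * (σ * Complex.I) - A)) (𝓝[>] 0)
      (𝓝 (Real.log (s - A))) := by
    have : ContinuousAt (fun ε : ℝ => Complex.log ((s : ℂ) + ε * (σ * Complex.I) - A)) 0 := by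
      refine ContinuousAt.clog (by fun_prop) ?_
      left
      rw [hre]; linarith
    have h := this.tendsto.mono_left (nhdsWithin_le_nhds (s := Set.Ioi 0))
    convert h using 2
    rw [Complex.ofReal_log (by linarith)]
    simp
  have hT := hD.add ((hlogA.sub hlog).const_mul (α s : ℂ))
  have hlim : (∫ r in A..B, -(((α r - α s) / (r - s) : ℝ) : ℂ)) +
      (α s : ℂ) * ((Real.log (s - A) : ℂ) - (Real.log (B - s) + θ * Complex.I)) =
      (-(((∫ r in A..B, (α r - α s) / (r - s)) +
          α s * (Real.log (B - s) - Real.log (s - A)) : ℝ) : ℂ) - θ * α s * Complex.I) := by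
    rw [intervalIntegral.integral_neg, intervalIntegral.integral_ofReal]
    push_cast
    ring
  rw [hlim] at hT
  refine hT.congr' ?_
  filter_upwards [self_mem_nhdsWithin] with ε hε
  have hi : ∫ r in A..B, ((s : ℂ) + ε * (σ * Complex.I) - (r : ℂ))⁻¹ =
      Complex.log ((s : ℂ) + ε * (σ * Complex.I) - A) -
      Complex.log ((s : ℂ) + ε * (σ * Complex.I) - B) := by
    have := intervalIntegral.integral_eq_sub_of_hasDerivAt (a := A) (b := B)
      (f := fun r : ℝ => -Complex.log ((s : ℂ) + ε * (σ * Complex.I) - r))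
      (f' := fun r : ℝ => ((s : ℂ) + ε * (σ * Complex.I) - (r : ℂ))⁻¹) ?_
      ((hcont ε hε).intervalIntegrable _ _)
    · rw [this]; ring
    · intro r _
      have h := (((hasDerivAt_id r).ofReal_comp.const_sub
        ((s : ℂ) + ε * (σ * Complex.I))).clog_real (hslit ε hε r)).neg
      refine HasDerivAt.congr_deriv h ?_
      simp [neg_div]
  rw [← hi, ← intervalIntegral.integral_const_mul, ← intervalIntegral.integral_add]
  · apply intervalIntegral.integral_congr
    intro r _
    simp only [div_eq_mul_inv]
    ring
  · apply ContinuousOn.intervalIntegrable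
    rw [Set.uIcc_of_le hAB.le]
    exact hβc.mul (hcont ε hε).continuousOn
  · exact ((hcont ε hε).intervalIntegrable _ _).const_mul _

lemma aux_log_pos (B s : ℝ) (h : s < B) :
    Tendsto (fun ε : ℝ => Complex.log ((s : ℂ) + ε * ((1 : ℝ) * Complex.I) - B)) (𝓝[>] 0)
      (𝓝 (Real.log (B - s) + Real.pi * Complex.I)) := by
  have h0 := Complex.tendsto_log_nhdsWithin_im_nonneg_of_re_neg_of_im_zero (z := ((s - B : ℝ) : ℂ))
    (by simpa using h) (by simp)
  have hn : ‖((s - B : ℝ) : ℂ)‖ = B - s := by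
    rw [Complex.norm_real, Real.norm_eq_abs, abs_sub_comm, abs_of_pos (by linarith)]
  rw [hn] at h0
  refine h0.comp (tendsto_nhdsWithin_iff.mpr ⟨?_, ?_⟩)
  · have : Continuous (fun ε : ℝ => ((s : ℂ) + ε * ((1 : ℝ) * Complex.I) - B)) := by fun_prop
    have h := (this.tendsto 0).mono_left (nhdsWithin_le_nhds (s := Set.Ioi 0))
    simpa using h
  · filter_upwards [self_mem_nhdsWithin] with ε hε
    simpa using (le_of_lt hε)

lemma aux_log_neg (B s : ℝ) (h : s < B) :
    Tendsto (fun ε : ℝ => Complex.log ((s : ℂ) + ε * ((-1 : ℝ) * Complex.I) - B)) (𝓝[>] 0)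
      (𝓝 (Real.log (B - s) + (-Real.pi : ℝ) * Complex.I)) := by
  have h0 := Complex.tendsto_log_nhdsWithin_im_neg_of_re_neg_of_im_zero (z := ((s - B : ℝ) : ℂ))
    (by simpa using h) (by simp)
  have hn : ‖((s - B : ℝ) : ℂ)‖ = B - s := by
    rw [Complex.norm_real, Real.norm_eq_abs, abs_sub_comm, abs_of_pos (by linarith)]
  rw [hn, show (Real.log (B - s) : ℂ) - Real.pi * Complex.I =
    Real.log (B - s) + (-Real.pi : ℝ) * Complex.I by push_cast; ring] at h0
  refine h0.comp (tendsto_nhdsWithin_iff.mpr ⟨?_, ?_⟩)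
  · have : Continuous (fun ε : ℝ => ((s : ℂ) + ε * ((-1 : ℝ) * Complex.I) - B)) := by fun_prop
    have h := (this.tendsto 0).mono_left (nhdsWithin_le_nhds (s := Set.Ioi 0))
    simpa using h
  · filter_upwards [self_mem_nhdsWithin] with ε hε
    simpa using hε

/-- Boundary values of the canonical solution `Φ(z) = exp(∫_A^B α(r)/(z−r) dr)` of the
homogeneous Riemann–Hilbert problem: `Φ^±(s) = exp(−π H[α](s) ∓ iπ α(s))` for `s ∈ (A,B)`,
so that `Φ⁺(s) = e^{−2πi α(s)} Φ⁻(s)`. -/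
theorem boundary_values_of_canonical_solution (A B : ℝ) (hAB : A < B) (α : ℝ → ℝ)
    (γ : ℝ) (hγ : γ ∈ Set.Ioc (0 : ℝ) 1) (C : ℝ) (hC : 0 ≤ C)
    (hα : ∀ r ∈ Set.Icc A B, ∀ r' ∈ Set.Icc A B, |α r - α r'| ≤ C * |r - r'| ^ γ)
    (Φ : ℂ → ℂ)
    (hΦ : ∀ z : ℂ, Φ z = Complex.exp (∫ r in A..B, (α r : ℂ) / (z - (r : ℂ))))
    (s : ℝ) (hs : s ∈ Set.Ioo A B) :
    ∃ Hαs : ℝ,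
      Tendsto (fun ε : ℝ =>
          (∫ r in A..(s - ε), α r / (r - s)) + ∫ r in (s + ε)..B, α r / (r - s))
        (𝓝[>] 0) (𝓝 (Real.pi * Hαs)) ∧
      Tendsto (fun ε : ℝ => Φ ((s : ℂ) + (ε : ℂ) * Complex.I)) (𝓝[>] 0)
        (𝓝 (Complex.exp (-((Real.pi : ℂ) * (Hαs : ℂ)) -
          (Real.pi : ℂ) * (α s : ℂ) * Complex.I))) ∧
      Tendsto (fun ε : ℝ => Φ ((s : ℂ) - (ε : ℂ) * Complex.I)) (𝓝[>] 0)
        (𝓝 (Complex.exp (-((Real.pi : ℂ) * (Hαs : ℂ)) +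
          (Real.pi : ℂ) * (α s : ℂ) * Complex.I))) ∧
      Complex.exp (-((Real.pi : ℂ) * (Hαs : ℂ)) - (Real.pi : ℂ) * (α s : ℂ) * Complex.I) =
        Complex.exp (-(2 * (Real.pi : ℂ) * (α s : ℂ) * Complex.I)) *
          Complex.exp (-((Real.pi : ℂ) * (Hαs : ℂ)) + (Real.pi : ℂ) * (α s : ℂ) * Complex.I) := by
  have hc := aux_holder_cont A B α γ hγ.1 C hα
  have hg := aux_g_int A B α γ hγ.1 C hα s hs
  set P : ℝ := (∫ r in A..B, (α r - α s) / (r - s)) +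
    α s * (Real.log (B - s) - Real.log (s - A)) with hP
  have hpi : Real.pi * (P / Real.pi) = P := by
    field_simp
  have hpc : (Real.pi : ℂ) * ((P / Real.pi : ℝ) : ℂ) = (P : ℂ) := by
    rw [← Complex.ofReal_mul, hpi]
  refine ⟨P / Real.pi, ?_, ?_, ?_, ?_⟩
  · rw [hpi]
    exact aux_pv A B α hc s hs hg
  · rw [hpc]
    have h := aux_cx A B α hc s hs hg 1 Real.pi one_ne_zero (aux_log_pos B s hs.2)
    refine ((Complex.continuous_exp.tendsto _).comp h).congr ?_
    intro ε
    simp [hΦ]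
  · rw [hpc]
    have h := aux_cx A B α hc s hs hg (-1) (-Real.pi) (by norm_num) (aux_log_neg B s hs.2)
    have h' := (Complex.continuous_exp.tendsto _).comp h
    rw [← hP, show (-(P : ℂ) - (-Real.pi : ℝ) * α s * Complex.I) =
      -(P : ℂ) + Real.pi * α s * Complex.I by push_cast; ring] at h'
    refine h'.congr ?_
    intro ε
    simp [hΦ, sub_eq_add_neg]
  · rw [← Complex.exp_add]
    congr 1
    ring
end
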